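/- arXiv:2009.01580 — 10 statements merged into one kernel-verified Lean document; each statement's English description precedes it below -/
import Mathlib

section
/- Let n ≥ 3 and 2 ≤ k ≤ n−1. Let f : ℂ^n → ℂ^n be a linear automorphism such that for every k-element subset J ⊆ {1,…,n} there exists a k-element subset J' ⊆ {1,…,n} with f(span{e_j : j ∈ J}) = span{e_j : j ∈ J'}. Then there exist a permutation s of {1,…,n} and nonzero scalars λ_1,…,λ_n ∈ ℂ such that f(e_i) = λ_i e_{s(i)} for all i; in particular f permutes the coordinate lines of ℂ^n up to scalars. -/
lemma mem_coordSpan {n : ℕ} (J : Finset (Fin n)) (v : Fin n → ℂ) :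
    v ∈ Submodule.span ℂ ((fun j => (Pi.single j (1 : ℂ) : Fin n → ℂ)) '' (J : Set (Fin n))) ↔
      ∀ j, j ∉ J → v j = 0 := by
  have h := (Pi.basisFun ℂ (Fin n)).mem_span_image (m := v) (s := (J : Set (Fin n)))
  have e : (fun j => (Pi.single j (1 : ℂ) : Fin n → ℂ)) = ⇑(Pi.basisFun ℂ (Fin n)) := by
    funext j; simp
  rw [e, h]
  constructor
  · intro h j hj
    by_contra hv
    exact hj (h (by simpa using hv))
  · intro h j hj
    by_contra hv
    have := h j hv
    simp [this] at hj

/-- A linear automorphism of ℂ^n mapping k-dimensional coordinate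
subspaces to k-dimensional coordinate subspaces permutes the coordinate lines
up to nonzero scalars. -/
theorem stmt0 (n k : ℕ) (hn : 3 ≤ n) (hk2 : 2 ≤ k) (hkn : k ≤ n - 1)
    (f : (Fin n → ℂ) ≃ₗ[ℂ] (Fin n → ℂ))
    (hf : ∀ J : Finset (Fin n), J.card = k →
      ∃ J' : Finset (Fin n), J'.card = k ∧
        Submodule.map (f : (Fin n → ℂ) →ₗ[ℂ] (Fin n → ℂ))
          (Submodule.span ℂ ((fun j => Pi.single j (1 : ℂ)) '' (J : Set (Fin n)))) =
        Submodule.span ℂ ((fun j => Pi.single j (1 : ℂ)) '' (J' : Set (Fin n)))) :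
    ∃ (s : Equiv.Perm (Fin n)) (lam : Fin n → ℂ), (∀ i, lam i ≠ 0) ∧
      ∀ i, f (Pi.single i (1 : ℂ)) = lam i • (Pi.single (s i) 1 : Fin n → ℂ) := by
  have desc : ∀ d m : ℕ, m + d = k → ∀ I : Finset (Fin n), I.card = m →
      ∃ I' : Finset (Fin n), ∀ v : Fin n → ℂ,
        (∀ j, j ∉ I → v j = 0) ↔ (∀ j, j ∉ I' → f v j = 0) := by
    intro d
    induction d with
    | zero =>
      intro m hm I hI
      obtain ⟨J', -, h⟩ := hf I (by omega)
      refine ⟨J', fun v => ?_⟩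
      rw [← mem_coordSpan, ← mem_coordSpan, ← h]
      simp
    | succ d ih =>
      intro m hm I hI
      have hc : 1 < Iᶜ.card := by
        rw [Finset.card_compl, Fintype.card_fin]; omega
      obtain ⟨a, ha, b, hb, hab⟩ := Finset.one_lt_card.1 hc
      rw [Finset.mem_compl] at ha hb
      obtain ⟨A, hA⟩ := ih (m + 1) (by omega) (insert a I) (by
        rw [Finset.card_insert_of_notMem ha, hI])
      obtain ⟨B, hB⟩ := ih (m + 1) (by omega) (insert b I) (by
        rw [Finset.card_insert_of_notMem hb, hI])
      refine ⟨A ∩ B, fun v => ?_⟩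
      have h1 := hA v
      have h2 := hB v
      have h3 : (∀ j, j ∉ I → v j = 0) ↔
          (∀ j, j ∉ insert a I → v j = 0) ∧ (∀ j, j ∉ insert b I → v j = 0) := by
        constructor
        · intro h
          exact ⟨fun j hj => h j (by grind), fun j hj => h j (by grind)⟩
        · rintro ⟨h, h'⟩ j hj
          by_cases hja : j = a
          · exact h' j (by grind)
          · exact h j (by grind)
      rw [h3, h1, h2]
      constructor
      · rintro ⟨h, h'⟩ j hj
        by_cases hja : j ∈ A
        · exact h' j (by grind)
        · exact h j hja
      · intro h
        exact ⟨fun j hj => h j (by grind), fun j hj => h j (by grind)⟩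
  have key : ∀ i : Fin n, ∃ a : Fin n, ∃ c : ℂ, c ≠ 0 ∧
      f (Pi.single i (1 : ℂ)) = c • (Pi.single a 1 : Fin n → ℂ) := by
    intro i
    obtain ⟨I', hI⟩ := desc (k - 1) 1 (by omega) {i} (by simp)
    have hw := (hI (Pi.single i 1)).1 (by
      intro j hj
      rw [Finset.mem_singleton] at hj
      simp [hj])
    have hne : f (Pi.single i (1 : ℂ)) ≠ 0 := by
      rw [Ne, LinearEquiv.map_eq_zero_iff]
      simp
    obtain ⟨a, ha⟩ := Function.ne_iff.1 hne
    have haI : a ∈ I' := by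
      by_contra h
      exact ha (hw a h)
    have hs := (hI (f.symm (Pi.single a 1))).2 (by
      intro j hj
      rw [LinearEquiv.apply_symm_apply]
      have : j ≠ a := by rintro rfl; exact hj haI
      simp [this])
    set u := f.symm (Pi.single a (1 : ℂ)) with hu
    have hu2 : u = u i • (Pi.single i 1 : Fin n → ℂ) := by
      funext j
      by_cases hj : j = i
      · subst hj; simp
      · simp [hj, hs j (by simpa using hj)]
    have hfu : (Pi.single a 1 : Fin n → ℂ) = u i • f (Pi.single i 1) := by
      rw [← map_smul, ← hu2, hu, LinearEquiv.apply_symm_apply]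
    have hui : u i ≠ 0 := by
      intro h0
      rw [h0, zero_smul] at hfu
      simp at hfu
    refine ⟨a, (u i)⁻¹, inv_ne_zero hui, ?_⟩
    rw [hfu, smul_smul, inv_mul_cancel₀ hui, one_smul]
  choose s lam hl hs using key
  have hinj : Function.Injective s := by
    intro i j hij
    have h1 : lam j • f (Pi.single i (1 : ℂ)) = lam i • f (Pi.single j (1 : ℂ)) := by
      rw [hs i, hs j, hij, smul_smul, smul_smul, mul_comm]
    rw [← map_smul, ← map_smul] at h1
    have h2 := congrFun (f.injective h1) i
    by_contra hne
    simp [hne, hl j] at h2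
  exact ⟨Equiv.ofBijective s (Finite.injective_iff_bijective.1 hinj), lam, hl, hs⟩
end

section
/- Let 1 ≤ k ≤ n−1 and let A be a complex (n−k)×k matrix. Let L be the n×k block matrix with top block the identity I_k and bottom block A, and let L' be the n×(n−k) block matrix with top block −Aᵀ and bottom block the identity I_{n−k}. Then for every k-element subset J ⊆ {1,…,n}, the k×k minor of L on the rows indexed by J equals, up to sign, the (n−k)×(n−k) minor of L' on the rows indexed by the complement J̄ = {1,…,n}∖J; that is, P^J(L) = ±P^{J̄}(L'). -/
/-- The k×k minor `P^J(M)` of an n×k matrix `M` on the rows indexed by a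
k-element subset `J`, the rows being taken in increasing order. -/
noncomputable def minorDet {n k : ℕ} (M : Matrix (Fin n) (Fin k) ℂ) (J : Finset (Fin n))
    (h : J.card = k) : ℂ :=
  (Matrix.of fun a b : Fin k => M (J.orderIsoOfFin h a) b).det

open Matrix in
theorem aux_minor {k m : ℕ} (A : Matrix (Fin m) (Fin k) ℂ)
    (e : Equiv.Perm (Fin k ⊕ Fin m)) :
    (Matrix.of fun a b : Fin k => Matrix.fromRows (1 : Matrix (Fin k) (Fin k) ℂ) A
        (e (Sum.inl a)) b).det =
      ((Equiv.Perm.sign e : ℤ) : ℂ) *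
      (Matrix.of fun a b : Fin m => Matrix.fromRows (-(A.transpose))
        (1 : Matrix (Fin m) (Fin m) ℂ) (e (Sum.inr a)) b).det := by
  set M : Matrix (Fin k ⊕ Fin m) (Fin k ⊕ Fin m) ℂ := fromBlocks 1 0 A 1 with hM
  set N : Matrix (Fin k ⊕ Fin m) (Fin k ⊕ Fin m) ℂ := fromBlocks 1 (-Aᵀ) 0 1 with hN
  have hMN : M * Nᵀ = 1 := by
    simp [hM, hN, fromBlocks_transpose, fromBlocks_multiply, fromBlocks_one]
  have hMdet : M.det = 1 := by simp [hM]
  set M1 := M.submatrix e id with hM1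
  set N1 := N.submatrix e id with hN1
  have h1 : M1 * N1ᵀ = 1 := by
    rw [hM1, hN1, transpose_submatrix, ← submatrix_mul _ _ _ _ _ Function.bijective_id, hMN,
      submatrix_one_equiv]
  have hdet : M1.det = ((Equiv.Perm.sign e : ℤ) : ℂ) := by
    rw [hM1, det_permute, hMdet, mul_one]
  have e1 : (Matrix.of fun a b : Fin k => Matrix.fromRows (1 : Matrix (Fin k) (Fin k) ℂ) A
        (e (Sum.inl a)) b) = M1.toBlocks₁₁ := by
    ext a b
    simp only [hM1, hM, toBlocks₁₁, of_apply, submatrix_apply, id]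
    cases e (Sum.inl a) <;> simp
  have e2 : (Matrix.of fun a b : Fin m => Matrix.fromRows (-(A.transpose))
        (1 : Matrix (Fin m) (Fin m) ℂ) (e (Sum.inr a)) b) = N1.toBlocks₂₂ := by
    ext a b
    simp only [hN1, hN, toBlocks₂₂, of_apply, submatrix_apply, id]
    cases e (Sum.inr a) <;> simp
  rw [e1, e2, ← hdet]
  clear_value M1 N1
  rw [← fromBlocks_toBlocks M1, ← fromBlocks_toBlocks N1, fromBlocks_transpose,
    fromBlocks_multiply, ← fromBlocks_one, fromBlocks_inj] at h1
  obtain ⟨-, h12, -, h22⟩ := h1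
  have key : M1 * fromBlocks 1 N1.toBlocks₂₁ᵀ 0 N1.toBlocks₂₂ᵀ =
      fromBlocks M1.toBlocks₁₁ 0 M1.toBlocks₂₁ 1 := by
    conv_lhs => rw [← fromBlocks_toBlocks M1]
    rw [fromBlocks_multiply, h12, h22]
    simp
  have := congrArg det key
  rw [det_mul, det_fromBlocks_zero₂₁, det_fromBlocks_zero₁₂, det_transpose] at this
  simpa using this.symm

/-- For the block matrices `L = (I_k; A)` and `L' = (−Aᵀ; I_{n−k})`
(with `n = k + m`), for every k-element subset `J` of the rows we have
`P^J(L) = ± P^{J̄}(L')` where `J̄` is the complement of `J`. -/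
theorem stmt2 (k m : ℕ) (hk : 1 ≤ k) (hm : 1 ≤ m)
    (A : Matrix (Fin m) (Fin k) ℂ)
    (L : Matrix (Fin (k + m)) (Fin k) ℂ)
    (L' : Matrix (Fin (k + m)) (Fin m) ℂ)
    (hL : L = (Matrix.fromRows (1 : Matrix (Fin k) (Fin k) ℂ) A).submatrix
      finSumFinEquiv.symm id)
    (hL' : L' = (Matrix.fromRows (-(A.transpose)) (1 : Matrix (Fin m) (Fin m) ℂ)).submatrix
      finSumFinEquiv.symm id)
    (J : Finset (Fin (k + m))) (hJ : J.card = k) (hJc : Jᶜ.card = m) :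
    minorDet L J hJ = minorDet L' Jᶜ hJc ∨ minorDet L J hJ = - minorDet L' Jᶜ hJc := by
  subst hL hL'
  have h := aux_minor A ((finSumEquivOfFinset hJ hJc).trans finSumFinEquiv.symm)
  simp only [Equiv.trans_apply, finSumEquivOfFinset_inl, finSumEquivOfFinset_inr] at h
  unfold minorDet
  simp only [Matrix.submatrix_apply, id, Finset.coe_orderIsoOfFin_apply]
  rw [h]
  rcases Int.units_eq_one_or (Equiv.Perm.sign
    ((finSumEquivOfFinset hJ hJc).trans finSumFinEquiv.symm)) with hs | hs <;> simp [hs]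
end

section
/- Let n ≥ 4 and let σ be an admissible set for G_{n,2} whose admissible polytope P_σ = conv{e_i+e_j : {i,j} ∈ σ} has affine dimension at most n−3. Then P_σ is contained in the boundary ∂Δ_{n,2}; equivalently, there exists i ∈ {1,…,n} such that either i belongs to no pair of σ (so x_i = 0 on P_σ), or i belongs to every pair of σ (so x_i = 1 on P_σ). -/
/-- The hypersimplex `Δ_{n,k} ⊂ ℝ^n`. -/
def hypersimplex (n k : ℕ) : Set (Fin n → ℝ) :=
  {x | (∀ i, 0 ≤ x i ∧ x i ≤ 1) ∧ ∑ i, x i = (k : ℝ)}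

/-- The Plücker coordinate `P^{ij}(A) = A_{i1}A_{j2} − A_{j1}A_{i2}` of an
n×2 complex matrix. -/
def plucker {n : ℕ} (A : Matrix (Fin n) (Fin 2) ℂ) (i j : Fin n) : ℂ :=
  A i 0 * A j 1 - A j 0 * A i 1

/-- The Plücker support `σ(A) = {{i,j} : P^{ij}(A) ≠ 0}` of an n×2 matrix. -/
def pluckerSupport {n : ℕ} (A : Matrix (Fin n) (Fin 2) ℂ) : Set (Finset (Fin n)) :=
  {p | ∃ i j : Fin n, i ≠ j ∧ p = {i, j} ∧ plucker A i j ≠ 0}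

/-- A set `σ` of 2-element subsets of `{1,…,n}` is admissible for `G_{n,2}`
if it is the Plücker support of some rank-2 complex n×2 matrix. -/
def IsAdmissible {n : ℕ} (σ : Set (Finset (Fin n))) : Prop :=
  ∃ A : Matrix (Fin n) (Fin 2) ℂ, A.rank = 2 ∧ pluckerSupport A = σ

/-- The 0/1 vertex `Λ_p = ∑_{i∈p} e_i` of the hypersimplex associated with a
subset `p` of indices. -/
def vertexOf {n : ℕ} (p : Finset (Fin n)) : Fin n → ℝ :=
  fun i => if i ∈ p then 1 else 0

/-- The admissible polytope `P_σ = conv{e_i + e_j : {i,j} ∈ σ}`. -/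
def admPolytope {n : ℕ} (σ : Set (Finset (Fin n))) : Set (Fin n → ℝ) :=
  convexHull ℝ (vertexOf '' σ)

theorem mem_frontier_of_zero (n : ℕ) (hn : 4 ≤ n) (x : Fin n → ℝ)
    (hx : x ∈ hypersimplex n 2) (i : Fin n) (hi : x i = 0) :
    x ∈ intrinsicFrontier ℝ (hypersimplex n 2) := by
  have hn' : (4 : ℝ) ≤ n := by exact_mod_cast hn
  have hy : (fun _ => 2 / (n : ℝ) : Fin n → ℝ) ∈ hypersimplex n 2 := by
    refine ⟨fun _ => ⟨by positivity, ?_⟩, ?_⟩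
    · rw [div_le_one (by linarith)]; linarith
    · simp; field_simp
  set y : Fin n → ℝ := fun _ => 2 / (n : ℝ) with hydef
  rw [← intrinsicClosure_diff_intrinsicInterior]
  refine ⟨subset_intrinsicClosure hx, ?_⟩
  intro hint
  rw [mem_intrinsicInterior] at hint
  obtain ⟨z, hz, hzx⟩ := hint
  have hxs := subset_affineSpan ℝ _ hx
  have hys := subset_affineSpan ℝ _ hy
  let g : ℝ → affineSpan ℝ (hypersimplex n 2) := fun t =>
    ⟨AffineMap.lineMap x y t, AffineMap.lineMap_mem t hxs hys⟩
  have hg : Continuous g := by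
    refine Continuous.subtype_mk ?_ _
    exact AffineMap.lineMap_continuous
  have hg0 : g 0 = z := by
    apply Subtype.ext
    simp [g, hzx]
  have hnb : g ⁻¹' (interior ((↑) ⁻¹' hypersimplex n 2)) ∈ nhds (0 : ℝ) := by
    apply (isOpen_interior.preimage hg).mem_nhds
    simpa [hg0] using hz
  obtain ⟨ε, hε, hball⟩ := Metric.mem_nhds_iff.1 hnb
  have hm : (-(ε / 2)) ∈ Metric.ball (0 : ℝ) ε := by
    simp [abs_of_pos hε, hε]
  have h1 := interior_subset (hball hm)
  have h2 := (h1.1 i).1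
  simp only [g, AffineMap.lineMap_apply_module, Pi.add_apply, Pi.smul_apply, hi, hydef,
    smul_eq_mul] at h2
  have : 0 < ε / 2 * (2 / (n : ℝ)) := by positivity
  linarith

theorem admPolytope_subset (n : ℕ) (A : Matrix (Fin n) (Fin 2) ℂ) (i : Fin n)
    (h : ∀ p ∈ pluckerSupport A, i ∉ p) :
    admPolytope (pluckerSupport A) ⊆ {x | x ∈ hypersimplex n 2 ∧ x i = 0} := by
  refine convexHull_min ?_ ?_
  · rintro _ ⟨p, hp, rfl⟩
    refine ⟨⟨fun j => ?_, ?_⟩, ?_⟩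
    · unfold vertexOf; split_ifs <;> norm_num
    · obtain ⟨a, b, hab, rfl, -⟩ := hp
      simp only [vertexOf, Finset.sum_ite_mem, Finset.univ_inter, Finset.sum_const,
        Finset.card_pair hab]
      norm_num
    · simp [vertexOf, h p hp]
  · rintro x ⟨⟨hx1, hx2⟩, hx3⟩ y ⟨⟨hy1, hy2⟩, hy3⟩ a b ha hb hab
    refine ⟨⟨fun j => ⟨?_, ?_⟩, ?_⟩, ?_⟩
    · have := (hx1 j).1
      have := (hy1 j).1
      simp only [Pi.add_apply, Pi.smul_apply, smul_eq_mul]; positivity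
    · have := (hx1 j).2
      have := (hy1 j).2
      simp only [Pi.add_apply, Pi.smul_apply, smul_eq_mul]; nlinarith
    · simp only [Pi.add_apply, Pi.smul_apply, smul_eq_mul, Finset.sum_add_distrib,
        ← Finset.mul_sum, hx2, hy2]
      rw [← add_mul, hab, one_mul]
    · simp [hx3, hy3]

theorem vertexOf_pair {n : ℕ} {a b : Fin n} (hab : a ≠ b) :
    vertexOf {a, b} = Pi.single a (1 : ℝ) + Pi.single b 1 := by
  ext j
  simp only [vertexOf, Finset.mem_insert, Finset.mem_singleton, Pi.add_apply, Pi.single_apply]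
  by_cases h1 : j = a <;> by_cases h2 : j = b <;> simp_all

theorem plucker_ne {n : ℕ} {A : Matrix (Fin n) (Fin 2) ℂ} {i j : Fin n}
    (h : plucker A i j ≠ 0) : i ≠ j := by
  rintro rfl
  exact h (by simp [plucker])

theorem exists_loop (n : ℕ) (hn : 4 ≤ n) (A : Matrix (Fin n) (Fin 2) ℂ)
    (hdim : Module.finrank ℝ (affineSpan ℝ (admPolytope (pluckerSupport A))).direction ≤ n - 3) :
    ∃ i : Fin n, ∀ p ∈ pluckerSupport A, i ∉ p := by
  by_contra! hcon
  obtain ⟨p, ⟨a, b, hab, rfl, hP⟩, -⟩ := hcon ⟨0, by omega⟩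
  set V := (affineSpan ℝ (admPolytope (pluckerSupport A))).direction with hV
  have hmem : ∀ i j, plucker A i j ≠ 0 →
      (Pi.single i (1 : ℝ) + Pi.single j 1 : Fin n → ℝ) ∈
        affineSpan ℝ (admPolytope (pluckerSupport A)) := by
    intro i j h
    rw [← vertexOf_pair (plucker_ne h)]
    exact subset_affineSpan ℝ _ (subset_convexHull ℝ _
      ⟨_, ⟨i, j, plucker_ne h, rfl, h⟩, rfl⟩)
  -- every row is non-zero
  have hrow : ∀ i, A i 0 ≠ 0 ∨ A i 1 ≠ 0 := by
    intro i
    by_contra! h0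
    obtain ⟨q, ⟨c, d, -, rfl, hcd⟩, hi⟩ := hcon i
    simp only [Finset.mem_insert, Finset.mem_singleton] at hi
    rcases hi with rfl | rfl <;> exact hcd (by simp [plucker, h0.1, h0.2])
  have hab' : plucker A a b ≠ 0 := hP
  have hkey : ∀ i, plucker A a i ≠ 0 ∨ plucker A b i ≠ 0 := by
    intro i
    by_contra! h0
    obtain ⟨h1, h2⟩ := h0
    simp only [plucker] at h1 h2 hP
    rcases hrow i with h | h
    · apply mul_ne_zero hP h
      linear_combination A b 0 * h1 - A a 0 * h2
    · apply mul_ne_zero hP h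
      linear_combination A b 1 * h1 - A a 1 * h2
  have hba : plucker A b a ≠ 0 := by
    intro h; apply hP
    simp only [plucker] at h ⊢
    linear_combination -h
  let W : Submodule ℝ (Fin n → ℝ) :=
    Submodule.span ℝ (({Pi.single a 1, Pi.single b 1} : Finset (Fin n → ℝ)) : Set (Fin n → ℝ))
  have haW : Pi.single a (1 : ℝ) ∈ W := Submodule.subset_span (by simp)
  have hbW : Pi.single b (1 : ℝ) ∈ W := Submodule.subset_span (by simp)
  have htop : V ⊔ W = ⊤ := by
    rw [eq_top_iff, ← (Pi.basisFun ℝ (Fin n)).span_eq, Submodule.span_le]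
    rintro _ ⟨i, rfl⟩
    rw [Pi.basisFun_apply]
    rcases hkey i with h | h
    · have := AffineSubspace.vsub_mem_direction (hmem a i h) (hmem a b hab')
      have h2 := Submodule.add_mem_sup this hbW
      simpa using h2
    · have := AffineSubspace.vsub_mem_direction (hmem b i h) (hmem b a hba)
      have h2 := Submodule.add_mem_sup this haW
      simpa using h2
  have h1 := Submodule.finrank_add_le_finrank_add_finrank V W
  rw [htop, finrank_top, Module.finrank_fin_fun] at h1
  have h2 : Module.finrank ℝ W ≤ 2 :=
    (finrank_span_finset_le_card _).trans Finset.card_le_two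
  omega

theorem stmt6 (n : ℕ) (hn : 4 ≤ n) (σ : Set (Finset (Fin n))) (hσ : IsAdmissible σ)
    (hdim : Module.finrank ℝ (affineSpan ℝ (admPolytope σ)).direction ≤ n - 3) :
    admPolytope σ ⊆ intrinsicFrontier ℝ (hypersimplex n 2) ∧
    ∃ i : Fin n, (∀ p ∈ σ, i ∉ p) ∨ (∀ p ∈ σ, i ∈ p) := by
  obtain ⟨A, -, rfl⟩ := hσ
  obtain ⟨i, hi⟩ := exists_loop n hn A hdim
  refine ⟨fun x hx => ?_, i, Or.inl hi⟩
  obtain ⟨h1, h2⟩ := admPolytope_subset n A i hi hx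
  exact mem_frontier_of_zero n hn x h1 i h2
end

section
/- Fix distinct indices i, j ∈ {1,…,n} and a subset S ⊆ {1,…,n}∖{i,j} with 1 ≤ |S| ≤ n−3. Let F ⊆ ℝ^n be the linear span of the vectors e_j − e_s for s ∈ S together with the vectors e_i − e_q for q ∉ S ∪ {i,j}. Then the affine plane (e_i + e_j) + F equals {x ∈ ℝ^n : ∑_{m=1}^n x_m = 2 and x_j + ∑_{s∈S} x_s = 1}; in particular this plane has dimension n−2. -/
lemma split_sum {n : ℕ} {M : Type*} [AddCommMonoid M] (i j : Fin n) (hij : i ≠ j)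
    (S : Finset (Fin n)) (hiS : i ∉ S) (hjS : j ∉ S) (f : Fin n → M) :
    ∑ m, f m = ∑ q ∈ Finset.univ \ (S ∪ {i, j}), f q + (∑ s ∈ S, f s + (f i + f j)) := by
  rw [← Finset.sum_sdiff (Finset.subset_univ (S ∪ {i, j})), Finset.sum_union,
    Finset.sum_pair hij]
  simp [hiS, hjS]

/-- The affine plane through `Λ_{ij} = e_i + e_j` directed by the
span `F` of the edge vectors `e_j − e_s` (s ∈ S) and `e_i − e_q`
(q ∉ S ∪ {i,j}) equals `{x : ∑ x_m = 2, x_j + ∑_{s∈S} x_s = 1}`, and it has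
dimension `n − 2`. -/
theorem stmt7 (n : ℕ) (i j : Fin n) (hij : i ≠ j) (S : Finset (Fin n))
    (hiS : i ∉ S) (hjS : j ∉ S) (hcard : 1 ≤ S.card) (hcard' : S.card ≤ n - 3)
    (F : Submodule ℝ (Fin n → ℝ))
    (hF : F = Submodule.span ℝ
      (((fun s => Pi.single j (1 : ℝ) - Pi.single s 1) '' (S : Set (Fin n))) ∪
       ((fun q => Pi.single i (1 : ℝ) - Pi.single q 1) ''
         ((Finset.univ \ (S ∪ {i, j}) : Finset (Fin n)) : Set (Fin n))))) :
    ((fun v => (Pi.single i (1 : ℝ) + Pi.single j 1) + v) '' (F : Set (Fin n → ℝ)) =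
      {x : Fin n → ℝ | (∑ m, x m) = 2 ∧ x j + ∑ s ∈ S, x s = 1}) ∧
    Module.finrank ℝ F = n - 2 := by
  classical
  let L : (Fin n → ℝ) →ₗ[ℝ] ℝ × ℝ :=
    { toFun := fun x => (∑ m, x m, x j + ∑ s ∈ S, x s)
      map_add' := by
        intro x y
        ext
        · simp [Finset.sum_add_distrib]
        · simp only [Pi.add_apply, Finset.sum_add_distrib, Prod.mk_add_mk]
          ring
      map_smul' := by
        intro c x
        ext
        · simp [Finset.mul_sum]
        · simp [Finset.mul_sum, mul_add] }
  have hL : ∀ x, L x = (∑ m, x m, x j + ∑ s ∈ S, x s) := fun _ => rfl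
  have hLs : ∀ k, L (Pi.single k 1) = (1, (if j = k then 1 else 0) + if k ∈ S then 1 else 0) := by
    intro k
    simp [hL, Pi.single_apply]
  have hFL : F = LinearMap.ker L := by
    apply le_antisymm
    · rw [hF, Submodule.span_le]
      rintro _ (⟨s, hs, rfl⟩ | ⟨q, hq, rfl⟩)
      · have hs' : s ∈ S := hs
        have : j ≠ s := fun h => hjS (h ▸ hs')
        simp [hLs, hs', this, hjS]
      · simp only [Finset.coe_sdiff, Set.mem_diff, Finset.mem_coe, Finset.mem_union,
          Finset.mem_insert, Finset.mem_singleton, not_or] at hq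
        obtain ⟨-, h1, h2, h3⟩ := hq
        simp [hLs, h1, Ne.symm h3, hiS, hij.symm]
    · intro v hv
      rw [LinearMap.mem_ker, hL, Prod.mk_eq_zero] at hv
      obtain ⟨h1, h2⟩ := hv
      rw [split_sum i j hij S hiS hjS] at h1
      have hv : v = ∑ q ∈ Finset.univ \ (S ∪ {i, j}),
            (-v q) • (Pi.single i (1 : ℝ) - Pi.single q 1 : Fin n → ℝ) +
          ∑ s ∈ S, (-v s) • (Pi.single j (1 : ℝ) - Pi.single s 1 : Fin n → ℝ) := by
        have e : v = ∑ m, v m • (Pi.single m (1 : ℝ) : Fin n → ℝ) := by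
          ext k
          simp [Finset.sum_apply, Pi.single_apply]
        rw [split_sum i j hij S hiS hjS] at e
        have hj : v j = -∑ s ∈ S, v s := by linarith
        have hi : v i = -∑ q ∈ Finset.univ \ (S ∪ {i, j}), v q := by linarith
        rw [hi, hj] at e
        simp only [smul_sub, Finset.sum_sub_distrib, ← Finset.sum_smul, neg_smul,
          Finset.sum_neg_distrib] at e ⊢
        refine e.trans ?_
        abel
      rw [hv, hF]
      refine Submodule.add_mem _ (Submodule.sum_mem _ fun q hq => Submodule.smul_mem _ _ ?_)
        (Submodule.sum_mem _ fun q hq => Submodule.smul_mem _ _ ?_)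
      · exact Submodule.subset_span (Or.inr ⟨q, hq, rfl⟩)
      · exact Submodule.subset_span (Or.inl ⟨q, hq, rfl⟩)
  have hLij : L (Pi.single i 1 + Pi.single j 1) = (2, 1) := by
    rw [map_add, hLs, hLs]
    simp [hiS, hjS, hij.symm]
    norm_num
  constructor
  · ext x
    have hx : (x ∈ {x : Fin n → ℝ | (∑ m, x m) = 2 ∧ x j + ∑ s ∈ S, x s = 1}) ↔
        L x = (2, 1) := by
      rw [hL, Prod.mk.injEq]; rfl
    rw [hx, hFL]
    constructor
    · rintro ⟨v, hv, rfl⟩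
      have hv' : L v = 0 := hv
      simp only [map_add L _ v, hLij, hv', add_zero]
    · intro h
      refine ⟨x - (Pi.single i 1 + Pi.single j 1), ?_, by simp⟩
      change L _ = 0
      rw [map_sub, h, hLij, sub_self]
  · have hsurj : LinearMap.range L = ⊤ := by
      rw [LinearMap.range_eq_top]
      rintro ⟨a, b⟩
      refine ⟨(a - b) • Pi.single i 1 + b • Pi.single j 1, ?_⟩
      rw [map_add, map_smul, map_smul, hLs, hLs]
      simp [hiS, hjS, hij.symm]
    have := LinearMap.finrank_range_add_finrank_ker L
    rw [hsurj, finrank_top, Module.finrank_prod, Module.finrank_self, Module.finrank_fin_fun,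
      ← hFL] at this
    omega
end

section
/- Let n ≥ 4. A subset P ⊆ ℝ^n is an admissible polytope for G_{n,2} of affine dimension n−2 having nonempty intersection with the interior of Δ_{n,2} if and only if P = Δ_{n,2} ∩ {x ∈ ℝ^n : ∑_{i∈S} x_i = 1} for some subset S ⊆ {1,…,n} with 2 ≤ |S| ≤ ⌊n/2⌋. -/
theorem lin_indep_aux {n : ℕ} (A : Matrix (Fin n) (Fin 2) ℂ) (s t : Fin n)
    (hs : A s 0 = 1 ∧ A s 1 = 0) (ht : A t 0 = 0 ∧ A t 1 = 1) : A.rank = 2 := by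
  rw [← Matrix.rank_transpose]
  have : LinearIndependent ℂ A.transpose.row := by
    rw [Fintype.linearIndependent_iff]
    intro g hg
    have h1 := congrFun hg s
    have h2 := congrFun hg t
    simp [Fin.sum_univ_two, Matrix.row, hs, ht] at h1 h2
    intro i
    fin_cases i <;> simp [h1, h2]
  simpa using this.rank_matrix

/-- The edges of the complete bipartite graph on `S` and its complement. -/
def bipEdges {n : ℕ} (S : Finset (Fin n)) : Set (Finset (Fin n)) :=
  {p | ∃ s t, s ∈ S ∧ t ∉ S ∧ p = {s, t}}

theorem vertexOf_pair_s8 {n : ℕ} (s t : Fin n) (h : s ≠ t) :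
    vertexOf ({s, t} : Finset (Fin n)) = Pi.single s 1 + Pi.single t 1 := by
  ext i
  simp only [vertexOf, Finset.mem_insert, Finset.mem_singleton, Pi.add_apply, Pi.single_apply]
  by_cases h1 : i = s
  · subst h1; simp [h]
  · simp [h1]

theorem sum_compl_eq {n : ℕ} (S : Finset (Fin n)) (x : Fin n → ℝ) (hx : x ∈ hypersimplex n 2)
    (h : ∑ i ∈ S, x i = 1) : ∑ i ∈ Sᶜ, x i = 1 := by
  have h1 := Finset.sum_add_sum_compl S x
  have h2 := hx.2
  push_cast at h2
  linarith

theorem convex_target {n : ℕ} (S : Finset (Fin n)) :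
    Convex ℝ (hypersimplex n 2 ∩ {x | ∑ i ∈ S, x i = 1}) := by
  rintro x ⟨⟨hx1, hx2⟩, hx3⟩ y ⟨⟨hy1, hy2⟩, hy3⟩ a b ha hb hab
  simp only [Set.mem_ofPred_eq] at hx3 hy3
  refine ⟨⟨fun i => ?_, ?_⟩, ?_⟩
  · simp only [Pi.add_apply, Pi.smul_apply, smul_eq_mul]
    have := hx1 i
    have := hy1 i
    constructor
    · have := mul_nonneg ha (hx1 i).1
      have := mul_nonneg hb (hy1 i).1
      linarith
    · have := mul_le_mul_of_nonneg_left (hx1 i).2 ha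
      have := mul_le_mul_of_nonneg_left (hy1 i).2 hb
      linarith
  · simp only [Pi.add_apply, Pi.smul_apply, smul_eq_mul, Finset.sum_add_distrib, ← Finset.mul_sum,
      hx2, hy2]
    rw [← add_mul, hab, one_mul]
  · simp only [Set.mem_ofPred_eq, Pi.add_apply, Pi.smul_apply, smul_eq_mul, Finset.sum_add_distrib,
      ← Finset.mul_sum, hx3, hy3]
    linarith

theorem polytope_bip {n : ℕ} (S : Finset (Fin n)) :
    admPolytope (bipEdges S) = hypersimplex n 2 ∩ {x | ∑ i ∈ S, x i = 1} := by
  apply Set.Subset.antisymm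
  · refine convexHull_min ?_ (convex_target S)
    rintro _ ⟨_, ⟨s, t, hs, ht, rfl⟩, rfl⟩
    have hst : s ≠ t := fun h => ht (h ▸ hs)
    refine ⟨⟨fun i => ?_, ?_⟩, ?_⟩
    · unfold vertexOf
      split_ifs <;> norm_num
    · rw [vertexOf_pair_s8 s t hst]
      simp [Finset.sum_add_distrib]
      norm_num
    · rw [vertexOf_pair_s8 s t hst]
      simp [Finset.sum_add_distrib, Pi.single_apply, hs, ht]
  · rintro x ⟨hx, hS⟩
    have hT := sum_compl_eq S x hx hS
    simp only [Set.mem_ofPred_eq] at hS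
    have hx' : x = ∑ p ∈ S ×ˢ Sᶜ, (x p.1 * x p.2) • vertexOf ({p.1, p.2} : Finset (Fin n)) := by
      have : ∑ p ∈ S ×ˢ Sᶜ, (x p.1 * x p.2) • vertexOf ({p.1, p.2} : Finset (Fin n))
          = ∑ p ∈ S ×ˢ Sᶜ, (x p.1 * x p.2) • (Pi.single p.1 1 + Pi.single p.2 1) := by
        refine Finset.sum_congr rfl fun p hp => ?_
        rw [Finset.mem_product, Finset.mem_compl] at hp
        rw [vertexOf_pair_s8 p.1 p.2 (fun h => hp.2 (h ▸ hp.1))]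
      rw [this, Finset.sum_product]
      ext i
      simp only [smul_add, Finset.sum_add_distrib, Pi.add_apply, Finset.sum_apply, Pi.smul_apply,
        smul_eq_mul, Pi.single_apply, mul_ite, mul_one, mul_zero]
      have e1 : ∑ s ∈ S, ∑ t ∈ Sᶜ, (if i = s then x s * x t else 0) = if i ∈ S then x i else 0 := by
        rw [Finset.sum_comm]
        simp only [Finset.sum_ite_eq]
        split_ifs
        · rw [← Finset.mul_sum, hT, mul_one]
        · simp
      have e2 : ∑ s ∈ S, ∑ t ∈ Sᶜ, (if i = t then x s * x t else 0) = if i ∈ Sᶜ then x i else 0 := by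
        simp only [Finset.sum_ite_eq]
        split_ifs
        · rw [← Finset.sum_mul, hS, one_mul]
        · simp
      rw [e1, e2]
      by_cases hi : i ∈ S <;> simp [hi]
    rw [hx']
    refine (convex_convexHull ℝ _).sum_mem ?_ ?_ ?_
    · intro p _
      exact mul_nonneg (hx.1 _).1 (hx.1 _).1
    · rw [Finset.sum_product]
      simp only [← Finset.mul_sum, hT, mul_one, hS]
    · intro p hp
      rw [Finset.mem_product, Finset.mem_compl] at hp
      exact subset_convexHull ℝ _ ⟨_, ⟨p.1, p.2, hp.1, hp.2, rfl⟩, rfl⟩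

theorem single_pair_mem {n : ℕ} (i j : Fin n) (h : i ≠ j) :
    (Pi.single i 1 + Pi.single j 1 : Fin n → ℝ) ∈ hypersimplex n 2 := by
  rw [← vertexOf_pair_s8 i j h]
  refine ⟨fun k => ?_, ?_⟩
  · unfold vertexOf
    split_ifs <;> norm_num
  · rw [vertexOf_pair_s8 i j h]
    simp [Finset.sum_add_distrib]
    norm_num

theorem exists_third {n : ℕ} (hn : 4 ≤ n) (i j : Fin n) : ∃ k, k ≠ i ∧ k ≠ j := by
  have : ({i, j} : Finset (Fin n)).card < Fintype.card (Fin n) := by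
    have := Finset.card_le_two (a := i) (b := j)
    simp only [Fintype.card_fin]; omega
  obtain ⟨k, hk⟩ := Finset.exists_mem_notMem_of_card_lt_card (s := {i, j}) (t := Finset.univ) (by simpa using this)
  exact ⟨k, by simpa using hk⟩

theorem dir_of_pair {n : ℕ} (P : Set (Fin n → ℝ)) (i j k : Fin n)
    (h1 : (Pi.single i 1 + Pi.single k 1 : Fin n → ℝ) ∈ P)
    (h2 : (Pi.single j 1 + Pi.single k 1 : Fin n → ℝ) ∈ P) :
    (Pi.single i 1 - Pi.single j 1 : Fin n → ℝ) ∈ (affineSpan ℝ P).direction := by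
  have := AffineSubspace.vsub_mem_direction (subset_affineSpan ℝ P h1) (subset_affineSpan ℝ P h2)
  simpa using this

theorem interior_strict {n : ℕ} (hn : 4 ≤ n) (x : Fin n → ℝ)
    (hx : x ∈ intrinsicInterior ℝ (hypersimplex n 2)) : ∀ i, 0 < x i ∧ x i < 1 := by
  have key : ∀ i j : Fin n, i ≠ j → 0 < x i ∧ x j < 1 := by
    intro i j hij
    obtain ⟨k, hki, hkj⟩ := exists_third hn i j
    have hd := dir_of_pair (hypersimplex n 2) j i k (single_pair_mem j k hkj.symm)
      (single_pair_mem i k hki.symm)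
    obtain ⟨y, hy, rfl⟩ := hx
    let f : ℝ → affineSpan ℝ (hypersimplex n 2) := fun t =>
      ⟨t • (Pi.single j 1 - Pi.single i 1 : Fin n → ℝ) +ᵥ (y : Fin n → ℝ),
        AffineSubspace.vadd_mem_of_mem_direction (Submodule.smul_mem _ t hd) y.2⟩
    have hf : Continuous f := by
      apply Continuous.subtype_mk
      simp only [vadd_eq_add]
      fun_prop
    have hf0 : f 0 = y := by
      apply Subtype.ext
      simp [f]
    have hev : ∀ᶠ t in nhds (0 : ℝ), f t ∈ interior ((↑) ⁻¹' hypersimplex n 2 : Set (affineSpan ℝ (hypersimplex n 2))) :=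
      hf.continuousAt.eventually_mem (by rw [hf0]; exact isOpen_interior.mem_nhds hy)
    obtain ⟨e, he, hb⟩ := Metric.eventually_nhds_iff.1 hev
    have h := interior_subset (hb (y := e / 2) (by rw [Real.dist_eq, sub_zero, abs_of_pos] <;> linarith))
    have hi := (h.1 i).1
    have hj := (h.1 j).2
    simp [f, Pi.single_apply, hij, hij.symm] at hi hj
    constructor <;> linarith
  intro i
  obtain ⟨k, hk, _⟩ := exists_third hn i i
  exact ⟨(key i k hk.symm).1, (key k i hk).2⟩

theorem strict_interior {n : ℕ} (x : Fin n → ℝ) (hs : ∑ i, x i = 2)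
    (hx : ∀ i, 0 < x i ∧ x i < 1) : x ∈ intrinsicInterior ℝ (hypersimplex n 2) := by
  have hx2 : x ∈ hypersimplex n 2 := ⟨fun i => ⟨(hx i).1.le, (hx i).2.le⟩, by simpa using hs⟩
  refine ⟨⟨x, subset_affineSpan ℝ _ hx2⟩, ?_, rfl⟩
  rw [mem_interior]
  refine ⟨{y | ∀ i, 0 < (y : Fin n → ℝ) i ∧ (y : Fin n → ℝ) i < 1}, ?_, ?_, hx⟩
  · rintro ⟨y, hy⟩ hy2
    refine ⟨fun i => ⟨(hy2 i).1.le, (hy2 i).2.le⟩, ?_⟩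
    let φ : (Fin n → ℝ) →ₗ[ℝ] ℝ := ∑ i, LinearMap.proj i
    have hφ : ∀ z, φ z = ∑ i, z i := fun z => by simp [φ]
    have hd : y - x ∈ (affineSpan ℝ (hypersimplex n 2)).direction :=
      AffineSubspace.vsub_mem_direction hy (subset_affineSpan ℝ _ hx2)
    have hle : (affineSpan ℝ (hypersimplex n 2)).direction ≤ LinearMap.ker φ := by
      rw [direction_affineSpan, vectorSpan_def, Submodule.span_le]
      rintro _ ⟨a, ha, b, hb, rfl⟩
      have h1 := ha.2
      have h2 := hb.2
      simp only [vsub_eq_sub, SetLike.mem_coe, LinearMap.mem_ker, hφ, Pi.sub_apply, Finset.sum_sub_distrib, h1, h2, sub_self]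
    have := hle hd
    rw [LinearMap.mem_ker, map_sub, hφ, hφ, hs] at this
    push_cast
    linarith
  · simp only [Set.ofPred_forall]
    refine isOpen_iInter_of_finite fun i => ?_
    have hc : Continuous fun y : affineSpan ℝ (hypersimplex n 2) => (y : Fin n → ℝ) i :=
      (continuous_apply i).comp continuous_subtype_val
    exact (isOpen_lt continuous_const hc).inter (isOpen_lt hc continuous_const)

theorem top_of_singles {n : ℕ} (W : Submodule ℝ (Fin n → ℝ))
    (h : ∀ i, (Pi.single i 1 : Fin n → ℝ) ∈ W) : W = ⊤ := by
  rw [eq_top_iff]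
  intro x _
  have : x = ∑ i, x i • (Pi.single i 1 : Fin n → ℝ) := by
    ext j
    simp [Pi.single_apply]
  rw [this]
  exact Submodule.sum_mem _ fun i _ => W.smul_mem _ (h i)

theorem finrank_ge {n : ℕ} (D : Submodule ℝ (Fin n → ℝ)) (F : Finset (Fin n))
    (h : ∀ i, ∃ j ∈ F, (Pi.single i 1 - Pi.single j 1 : Fin n → ℝ) ∈ D) :
    n ≤ Module.finrank ℝ D + F.card := by
  let E := Submodule.span ℝ ((F.image fun j => (Pi.single j 1 : Fin n → ℝ) : Finset _) : Set (Fin n → ℝ))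
  have hE : Module.finrank ℝ E ≤ F.card :=
    (finrank_span_finset_le_card _).trans Finset.card_image_le
  have ht : D ⊔ E = ⊤ := by
    apply top_of_singles
    intro i
    obtain ⟨j, hj, hd⟩ := h i
    have : (Pi.single i 1 : Fin n → ℝ) = (Pi.single i 1 - Pi.single j 1) + Pi.single j 1 := by simp
    rw [this]
    refine Submodule.add_mem_sup hd (Submodule.subset_span ?_)
    simp only [Finset.coe_image]
    exact ⟨j, hj, rfl⟩
  have h1 := Submodule.finrank_add_le_finrank_add_finrank D E
  rw [ht, finrank_top, Module.finrank_fin_fun] at h1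
  omega

theorem bip_dim {n : ℕ} (S : Finset (Fin n)) (s t : Fin n) (hs : s ∈ S) (ht : t ∉ S) :
    Module.finrank ℝ (affineSpan ℝ (admPolytope (bipEdges S))).direction = n - 2 := by
  have hmem : ∀ a b, a ∈ S → b ∉ S →
      (Pi.single a 1 + Pi.single b 1 : Fin n → ℝ) ∈ admPolytope (bipEdges S) := by
    intro a b ha hb
    rw [← vertexOf_pair_s8 a b (fun h => hb (h ▸ ha))]
    exact subset_convexHull ℝ _ ⟨_, ⟨a, b, ha, hb, rfl⟩, rfl⟩
  have hst : s ≠ t := fun h => ht (h ▸ hs)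
  have hge := finrank_ge (affineSpan ℝ (admPolytope (bipEdges S))).direction {s, t} (by
    intro i
    by_cases hi : i ∈ S
    · exact ⟨s, by simp, dir_of_pair _ i s t (hmem i t hi ht) (hmem s t hs ht)⟩
    · refine ⟨t, by simp, dir_of_pair _ i t s ?_ ?_⟩
      · rw [add_comm]; exact hmem s i hs hi
      · rw [add_comm]; exact hmem s t hs ht)
  rw [Finset.card_pair hst] at hge
  let φ : (Fin n → ℝ) →ₗ[ℝ] ℝ × ℝ :=
    (∑ i ∈ S, LinearMap.proj i).prod (∑ i ∈ Sᶜ, LinearMap.proj i)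
  have hφ : ∀ z, φ z = (∑ i ∈ S, z i, ∑ i ∈ Sᶜ, z i) := fun z => by simp [φ]
  have hle : (affineSpan ℝ (admPolytope (bipEdges S))).direction ≤ LinearMap.ker φ := by
    rw [direction_affineSpan, vectorSpan_def, Submodule.span_le, polytope_bip]
    rintro _ ⟨a, ha, b, hb, rfl⟩
    have h1 := sum_compl_eq S a ha.1 ha.2
    have h2 := sum_compl_eq S b hb.1 hb.2
    have h3 : ∑ i ∈ S, a i = 1 := ha.2
    have h4 : ∑ i ∈ S, b i = 1 := hb.2
    simp only [vsub_eq_sub, SetLike.mem_coe, LinearMap.mem_ker, hφ, Pi.sub_apply, Finset.sum_sub_distrib, h1, h2, h3, h4,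
      sub_self, Prod.mk_zero_zero]
  have hsurj : Function.Surjective φ := by
    rintro ⟨a, b⟩
    refine ⟨a • Pi.single s 1 + b • Pi.single t 1, ?_⟩
    rw [hφ]
    simp [Finset.sum_add_distrib, Pi.single_apply, hs, ht]
  have hrn := LinearMap.finrank_range_add_finrank_ker φ
  rw [LinearMap.range_eq_top.2 hsurj, finrank_top, Module.finrank_prod, Module.finrank_self,
    Module.finrank_fin_fun] at hrn
  have := Submodule.finrank_mono hle
  omega

theorem par_trans {n : ℕ} (A : Matrix (Fin n) (Fin 2) ℂ) (a b c : Fin n)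
    (hb : A b 0 ≠ 0 ∨ A b 1 ≠ 0) (h1 : plucker A a b = 0) (h2 : plucker A b c = 0) :
    plucker A a c = 0 := by
  unfold plucker at *
  rcases hb with hb | hb
  · apply mul_left_cancel₀ hb
    linear_combination (A a 0) * h2 + (A c 0) * h1
  · apply mul_left_cancel₀ hb
    linear_combination (A a 1) * h2 + (A c 1) * h1

theorem par_symm {n : ℕ} (A : Matrix (Fin n) (Fin 2) ℂ) (a b : Fin n)
    (h1 : plucker A a b = 0) : plucker A b a = 0 := by
  unfold plucker at *
  linear_combination -h1

/-- for n ≥ 4, a set P ⊆ ℝ^n is an admissible polytope for G_{n,2}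
of affine dimension n−2 meeting the intrinsic interior of Δ_{n,2} iff
P = Δ_{n,2} ∩ {∑_{i∈S} x_i = 1} for some S with 2 ≤ |S| ≤ ⌊n/2⌋. -/
theorem stmt8 (n : ℕ) (hn : 4 ≤ n) (P : Set (Fin n → ℝ)) :
    (∃ σ : Set (Finset (Fin n)), IsAdmissible σ ∧ P = admPolytope σ ∧
      Module.finrank ℝ (affineSpan ℝ P).direction = n - 2 ∧
      (P ∩ intrinsicInterior ℝ (hypersimplex n 2)).Nonempty) ↔
    (∃ S : Finset (Fin n), 2 ≤ S.card ∧ S.card ≤ n / 2 ∧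
      P = hypersimplex n 2 ∩ {x | ∑ i ∈ S, x i = 1}) := by
  constructor
  · rintro ⟨σ, ⟨A, -, rfl⟩, rfl, hdim, x, hxP, hxI⟩
    have hx := interior_strict hn x hxI
    have hnz : ∀ i, A i 0 ≠ 0 ∨ A i 1 ≠ 0 := by
      intro i
      by_contra! hi
      have hsub : admPolytope (pluckerSupport A) ⊆ {y | y i = 0} := by
        refine convexHull_min ?_ ?_
        · rintro _ ⟨_, ⟨a, b, hab, rfl, hp⟩, rfl⟩
          simp only [Set.mem_ofPred_eq, vertexOf, Finset.mem_insert, Finset.mem_singleton,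
            ite_eq_right_iff]
          rintro (rfl | rfl) <;> simp [plucker, hi] at hp
        · intro y hy z hz a b _ _ _
          simp only [Set.mem_ofPred_eq] at hy hz
          simp [hy, hz]
      exact (hx i).1.ne' (hsub hxP)
    by_cases h3 : ∀ i j, ∃ k, plucker A i k ≠ 0 ∧ plucker A j k ≠ 0
    · exfalso
      have hmem : ∀ a b, plucker A a b ≠ 0 →
          (Pi.single a 1 + Pi.single b 1 : Fin n → ℝ) ∈ admPolytope (pluckerSupport A) := by
        intro a b h
        have hab : a ≠ b := by
          rintro rfl
          exact h (by simp [plucker])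
        rw [← vertexOf_pair_s8 a b hab]
        exact subset_convexHull ℝ _ ⟨_, ⟨a, b, hab, rfl, h⟩, rfl⟩
      have := finrank_ge (affineSpan ℝ (admPolytope (pluckerSupport A))).direction
        {⟨0, by omega⟩} (by
          intro i
          obtain ⟨k, h1, h2⟩ := h3 i ⟨0, by omega⟩
          exact ⟨_, Finset.mem_singleton_self _, dir_of_pair _ _ _ k (hmem _ _ h1) (hmem _ _ h2)⟩)
      rw [hdim, Finset.card_singleton] at this
      omega
    · push Not at h3
      obtain ⟨i, j, hij⟩ := h3
      classical
      let S : Finset (Fin n) := Finset.univ.filter fun k => plucker A i k = 0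
      have hS : ∀ k, k ∈ S ↔ plucker A i k = 0 := fun k => by simp [S]
      have hpar : ∀ a b, plucker A a b ≠ 0 ↔ ((a ∈ S ∧ b ∉ S) ∨ (b ∈ S ∧ a ∉ S)) := by
        intro a b
        have s1 := par_symm A
        have t1 := par_trans A
        constructor
        · intro h
          by_cases ha : a ∈ S <;> by_cases hb : b ∈ S
          · rw [hS] at ha hb
            exact absurd (t1 a i b (hnz i) (s1 _ _ ha) hb) h
          · exact Or.inl ⟨ha, hb⟩
          · exact Or.inr ⟨hb, ha⟩
          · rw [hS] at ha hb
            exact absurd (t1 a j b (hnz j) (s1 _ _ (hij a ha)) (hij b hb)) h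
        · rintro (⟨ha, hb⟩ | ⟨hb, ha⟩) h <;> rw [hS] at ha hb
          · exact hb (t1 i a b (hnz a) ha h)
          · exact ha (t1 i b a (hnz b) hb (s1 _ _ h))
      have hσ : pluckerSupport A = bipEdges S := by
        ext p
        constructor
        · rintro ⟨a, b, hab, rfl, h⟩
          rcases (hpar a b).1 h with ⟨ha, hb⟩ | ⟨hb, ha⟩
          · exact ⟨a, b, ha, hb, rfl⟩
          · exact ⟨b, a, hb, ha, Finset.pair_comm a b⟩
        · rintro ⟨a, b, ha, hb, rfl⟩
          exact ⟨a, b, fun h => hb (h ▸ ha), rfl, (hpar a b).2 (Or.inl ⟨ha, hb⟩)⟩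
      rw [hσ, polytope_bip] at hxP ⊢
      have c2 : ∀ U : Finset (Fin n), ∑ i ∈ U, x i = 1 → 2 ≤ U.card := by
        intro U hU
        by_contra! hc
        interval_cases hcard : U.card
        · rw [Finset.card_eq_zero] at hcard
          subst hcard
          simp at hU
        · obtain ⟨a, rfl⟩ := Finset.card_eq_one.1 hcard
          rw [Finset.sum_singleton] at hU
          exact (hx a).2.ne hU
      have cS := c2 S hxP.2
      have cT := c2 Sᶜ (sum_compl_eq S x hxP.1 hxP.2)
      have cc := Finset.card_add_card_compl S
      rw [Fintype.card_fin] at cc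
      by_cases hle : S.card ≤ n / 2
      · exact ⟨S, cS, hle, rfl⟩
      · refine ⟨Sᶜ, cT, by omega, ?_⟩
        ext y
        constructor
        · rintro ⟨h1, h2⟩
          exact ⟨h1, sum_compl_eq S y h1 h2⟩
        · rintro ⟨h1, h2⟩
          refine ⟨h1, ?_⟩
          have := sum_compl_eq Sᶜ y h1 h2
          rwa [compl_compl] at this
  · rintro ⟨S, h2, hle, rfl⟩
    have cc := Finset.card_add_card_compl S
    rw [Fintype.card_fin] at cc
    have hT : 2 ≤ Sᶜ.card := by omega
    obtain ⟨s, hs⟩ := Finset.card_pos.1 (show 0 < S.card by omega)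
    obtain ⟨t, ht⟩ := Finset.card_pos.1 (show 0 < Sᶜ.card by omega)
    rw [Finset.mem_compl] at ht
    refine ⟨bipEdges S, ?_, (polytope_bip S).symm, ?_, ?_⟩
    · let A : Matrix (Fin n) (Fin 2) ℂ :=
        Matrix.of fun i => if i ∈ S then ![1, 0] else ![0, 1]
      have hA1 : ∀ i, A i 0 = if i ∈ S then 1 else 0 := fun i => by
        by_cases h : i ∈ S <;> simp [A, h]
      have hA2 : ∀ i, A i 1 = if i ∈ S then 0 else 1 := fun i => by
        by_cases h : i ∈ S <;> simp [A, h]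
      refine ⟨A, lin_indep_aux A s t (by simp [hA1, hA2, hs]) (by simp [hA1, hA2, ht]), ?_⟩
      ext p
      constructor
      · rintro ⟨a, b, hab, rfl, h⟩
        by_cases ha : a ∈ S <;> by_cases hb : b ∈ S
        · simp [plucker, hA1, hA2, ha, hb] at h
        · exact ⟨a, b, ha, hb, rfl⟩
        · exact ⟨b, a, hb, ha, Finset.pair_comm a b⟩
        · simp [plucker, hA1, hA2, ha, hb] at h
      · rintro ⟨a, b, ha, hb, rfl⟩
        exact ⟨a, b, fun h => hb (h ▸ ha), rfl, by simp [plucker, hA1, hA2, ha, hb]⟩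
    · rw [← polytope_bip]
      exact bip_dim S s t hs ht
    · let x : Fin n → ℝ := fun i => if i ∈ S then (S.card : ℝ)⁻¹ else (Sᶜ.card : ℝ)⁻¹
      have r1 : (2 : ℝ) ≤ S.card := by exact_mod_cast h2
      have r2 : (2 : ℝ) ≤ Sᶜ.card := by exact_mod_cast hT
      have hx : ∀ i, 0 < x i ∧ x i < 1 := by
        intro i
        simp only [x]
        split_ifs
        · exact ⟨by positivity, inv_lt_one_of_one_lt₀ (by linarith)⟩
        · exact ⟨by positivity, inv_lt_one_of_one_lt₀ (by linarith)⟩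
      have e1 : ∑ i ∈ S, x i = 1 := by
        rw [Finset.sum_congr rfl (g := fun _ => (S.card : ℝ)⁻¹) (fun i hi => by simp [x, hi])]
        rw [Finset.sum_const, nsmul_eq_mul, mul_inv_cancel₀ (by positivity)]
      have e2 : ∑ i ∈ Sᶜ, x i = 1 := by
        rw [Finset.sum_congr rfl (g := fun _ => (Sᶜ.card : ℝ)⁻¹)
          (fun i hi => by simp only [x]; rw [if_neg (Finset.mem_compl.1 hi)])]
        rw [Finset.sum_const, nsmul_eq_mul, mul_inv_cancel₀ (by positivity)]
      have e3 : ∑ i, x i = 2 := by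
        rw [← Finset.sum_add_sum_compl S x, e1, e2]; norm_num
      exact ⟨x, ⟨⟨fun i => ⟨(hx i).1.le, (hx i).2.le⟩, by simpa using e3⟩, e1⟩,
        strict_interior x e3 hx⟩
end

section
/- Let n ≥ 4 and let S ⊆ {1,…,n} with |S| = p and 2 ≤ p ≤ n−2. The vertices of Δ_{n,2} lying on the hyperplane ∑_{i∈S} x_i = 1 are exactly the points e_i + e_j with exactly one of i, j belonging to S; there are exactly p(n−p) of them, the polytope Δ_{n,2} ∩ {x : ∑_{i∈S} x_i = 1} equals their convex hull, and its set of extreme points is exactly this set of p(n−p) points. -/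
theorem stmt9_VS (n : ℕ) (S : Finset (Fin n)) :
    {x : Fin n → ℝ | ∃ i j : Fin n, i ≠ j ∧
      ((i ∈ S ∧ j ∉ S) ∨ (i ∉ S ∧ j ∈ S)) ∧
      x = Pi.single i (1 : ℝ) + Pi.single j 1} =
    (fun q : Fin n × Fin n => (Pi.single q.1 (1 : ℝ) + Pi.single q.2 1 : Fin n → ℝ)) ''
      (↑(S ×ˢ Sᶜ) : Set (Fin n × Fin n)) := by
  ext x
  simp only [Set.mem_ofPred_eq, Set.mem_image, Finset.mem_coe, Finset.mem_product,
    Finset.mem_compl, Prod.exists]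
  constructor
  · rintro ⟨i, j, -, (h | h), rfl⟩
    · exact ⟨i, j, h, rfl⟩
    · exact ⟨j, i, ⟨h.2, h.1⟩, add_comm _ _⟩
  · rintro ⟨i, j, h, rfl⟩
    exact ⟨i, j, fun e => h.2 (e ▸ h.1), Or.inl h, rfl⟩

theorem stmt9_sum (n : ℕ) (S : Finset (Fin n)) (i j : Fin n) :
    ∑ k ∈ S, (Pi.single i (1 : ℝ) + Pi.single j 1 : Fin n → ℝ) k =
      (if i ∈ S then 1 else 0) + (if j ∈ S then 1 else 0) := by
  simp [Finset.sum_add_distrib, Pi.single_apply]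

theorem stmt9_ind (n : ℕ) (i j : Fin n) (h : i ≠ j) :
    (fun k => if k ∈ ({i, j} : Finset (Fin n)) then (1 : ℝ) else 0) =
      Pi.single i (1 : ℝ) + Pi.single j 1 := by
  funext k
  simp only [Finset.mem_insert, Finset.mem_singleton, Pi.add_apply, Pi.single_apply]
  by_cases h1 : k = i
  · subst h1; simp [h]
  · simp [h1]

theorem stmt9_ext (a b x y v : ℝ) (ha : 0 < a) (hb : 0 < b) (hab : a + b = 1)
    (hx : 0 ≤ x ∧ x ≤ 1) (hy : 0 ≤ y ∧ y ≤ 1) (hv : v = 0 ∨ v = 1)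
    (h : a * x + b * y = v) : x = v := by
  obtain ⟨hx0, hx1⟩ := hx
  obtain ⟨hy0, hy1⟩ := hy
  rcases hv with rfl | rfl
  · have := mul_nonneg ha.le hx0
    have := mul_nonneg hb.le hy0
    have h3 : a * x = 0 := by linarith
    exact (mul_eq_zero.1 h3).resolve_left ha.ne'
  · have := mul_nonneg ha.le (sub_nonneg.2 hx1)
    have := mul_nonneg hb.le (sub_nonneg.2 hy1)
    have h3 : a * (1 - x) = 0 := by linarith
    have := (mul_eq_zero.1 h3).resolve_left ha.ne'
    linarith

theorem stmt9_hull (n : ℕ) (S : Finset (Fin n)) :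
    hypersimplex n 2 ∩ {x | ∑ i ∈ S, x i = 1} = convexHull ℝ
    ((fun q : Fin n × Fin n => (Pi.single q.1 (1 : ℝ) + Pi.single q.2 1 : Fin n → ℝ)) ''
      (↑(S ×ˢ Sᶜ) : Set (Fin n × Fin n))) := by
  apply Set.Subset.antisymm
  · rintro x ⟨⟨hx, hs⟩, hS⟩
    simp only [Set.mem_ofPred_eq] at hS
    have hc : ∑ i ∈ Sᶜ, x i = 1 := by
      have := Finset.sum_add_sum_compl S x
      push_cast at hs
      linarith
    have key : x = ∑ q ∈ S ×ˢ Sᶜ, (x q.1 * x q.2) •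
        (Pi.single q.1 (1 : ℝ) + Pi.single q.2 1 : Fin n → ℝ) := by
      funext k
      rw [Finset.sum_apply, Finset.sum_product]
      simp only [Pi.smul_apply, Pi.add_apply, smul_eq_mul, mul_add, Finset.sum_add_distrib]
      have h1 : ∑ i ∈ S, ∑ j ∈ Sᶜ, x i * x j * (Pi.single i (1 : ℝ) : Fin n → ℝ) k
          = if k ∈ S then x k else 0 := by
        have : ∀ i ∈ S, ∑ j ∈ Sᶜ, x i * x j * (Pi.single i (1 : ℝ) : Fin n → ℝ) k
            = if k = i then x i else 0 := by
          intro i _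
          rw [← Finset.sum_mul, ← Finset.mul_sum, hc]
          simp [Pi.single_apply]
        rw [Finset.sum_congr rfl this]
        simp
      have h2 : ∑ i ∈ S, ∑ j ∈ Sᶜ, x i * x j * (Pi.single j (1 : ℝ) : Fin n → ℝ) k
          = if k ∈ S then 0 else x k := by
        rw [Finset.sum_comm]
        have : ∀ j ∈ Sᶜ, ∑ i ∈ S, x i * x j * (Pi.single j (1 : ℝ) : Fin n → ℝ) k
            = if k = j then x j else 0 := by
          intro i _
          rw [← Finset.sum_mul, ← Finset.sum_mul, hS]
          simp [Pi.single_apply]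
        rw [Finset.sum_congr rfl this]
        simp
      rw [h1, h2]
      split_ifs <;> simp
    rw [key]
    refine (convex_convexHull ℝ _).sum_mem ?_ ?_ ?_
    · intro q _
      exact mul_nonneg (hx _).1 (hx _).1
    · rw [Finset.sum_product]
      simp only [← Finset.mul_sum, hc, mul_one, hS]
    · intro q hq
      exact subset_convexHull ℝ _ ⟨q, hq, rfl⟩
  · apply convexHull_min
    · rintro _ ⟨⟨i, j⟩, h, rfl⟩
      simp only [Finset.mem_coe, Finset.mem_product, Finset.mem_compl] at h
      have hij : i ≠ j := fun e => h.2 (e ▸ h.1)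
      refine ⟨⟨fun k => ?_, ?_⟩, ?_⟩
      · simp only [← stmt9_ind n i j hij]
        split_ifs <;> norm_num
      · rw [stmt9_sum]; norm_num
      · simp only [Set.mem_ofPred_eq]
        rw [stmt9_sum]; simp [h]
    · rintro x ⟨⟨hx, hxs⟩, hxS⟩ y ⟨⟨hy, hys⟩, hyS⟩ a b ha hb hab
      simp only [Set.mem_ofPred_eq] at hxS hyS
      refine ⟨⟨fun k => ?_, ?_⟩, ?_⟩
      · simp only [Pi.add_apply, Pi.smul_apply, smul_eq_mul]
        have := hx k
        have := hy k
        constructor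
        · have := mul_nonneg ha (hx k).1
          have := mul_nonneg hb (hy k).1
          linarith
        · have := mul_le_mul_of_nonneg_left (hx k).2 ha
          have := mul_le_mul_of_nonneg_left (hy k).2 hb
          linarith
      · simp only [Pi.add_apply, Pi.smul_apply, smul_eq_mul, Finset.sum_add_distrib,
          ← Finset.mul_sum, hxs, hys]
        rw [← add_mul, hab, one_mul]
      · simp only [Set.mem_ofPred_eq, Pi.add_apply, Pi.smul_apply, smul_eq_mul,
          Finset.sum_add_distrib, ← Finset.mul_sum, hxS, hyS]
        linarith

/-- the vertices of `Δ_{n,2}` on the hyperplane `∑_{i∈S} x_i = 1`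
are exactly the points `e_i + e_j` with exactly one of `i, j` in `S`; there are
`p(n−p)` of them, `Δ_{n,2} ∩ {∑_{i∈S} x_i = 1}` is their convex hull, and they
are exactly its extreme points. -/
theorem stmt9 (n p : ℕ) (hn : 4 ≤ n) (S : Finset (Fin n)) (hS : S.card = p)
    (hp : 2 ≤ p) (hp' : p ≤ n - 2)
    (VS : Set (Fin n → ℝ))
    (hVS : VS = {x | ∃ i j : Fin n, i ≠ j ∧
      ((i ∈ S ∧ j ∉ S) ∨ (i ∉ S ∧ j ∈ S)) ∧
      x = Pi.single i (1 : ℝ) + Pi.single j 1}) :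
    ({x : Fin n → ℝ |
        (∃ J : Finset (Fin n), J.card = 2 ∧ x = fun i => if i ∈ J then (1 : ℝ) else 0) ∧
        ∑ i ∈ S, x i = 1} = VS) ∧
    VS.ncard = p * (n - p) ∧
    hypersimplex n 2 ∩ {x | ∑ i ∈ S, x i = 1} = convexHull ℝ VS ∧
    Set.extremePoints ℝ (hypersimplex n 2 ∩ {x | ∑ i ∈ S, x i = 1}) = VS := by
  rw [stmt9_VS] at hVS
  have hH := stmt9_hull n S
  rw [← hVS] at hH
  refine ⟨?_, ?_, hH, ?_⟩
  · rw [hVS, ← stmt9_VS]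
    ext x
    simp only [Set.mem_ofPred_eq]
    constructor
    · rintro ⟨⟨J, hJ, rfl⟩, hs⟩
      obtain ⟨i, j, hij, rfl⟩ := Finset.card_eq_two.1 hJ
      rw [stmt9_ind n i j hij] at hs ⊢
      rw [stmt9_sum] at hs
      refine ⟨i, j, hij, ?_, rfl⟩
      by_cases h1 : i ∈ S <;> by_cases h2 : j ∈ S <;> simp [h1, h2] at hs ⊢
    · rintro ⟨i, j, hij, h, rfl⟩
      refine ⟨⟨{i, j}, Finset.card_pair hij, (stmt9_ind n i j hij).symm⟩, ?_⟩
      rw [stmt9_sum]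
      rcases h with h | h <;> simp [h]
  · rw [hVS, Set.InjOn.ncard_image, Set.ncard_coe_finset, Finset.card_product,
      Finset.card_compl, hS, Fintype.card_fin]
    rintro ⟨i, j⟩ h ⟨k, l⟩ h' e
    simp only [Finset.mem_coe, Finset.mem_product, Finset.mem_compl] at h h' e
    have e1 := congrFun e i
    have e2 := congrFun e j
    have hij : i ≠ j := fun e => h.2 (e ▸ h.1)
    have hil : i ≠ l := fun e => h'.2 (e ▸ h.1)
    have hjk : j ≠ k := fun e => h.2 (e ▸ h'.1)
    simp [Pi.single_apply, hij, hij.symm, hil, hjk] at e1 e2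
    rw [e1, e2]
  · apply Set.Subset.antisymm
    · rw [hH]
      exact extremePoints_convexHull_subset
    · intro v hv
      have hm := hv
      have hv2 := subset_convexHull ℝ _ hv
      rw [← hH] at hv2
      rw [hVS, ← stmt9_VS] at hm
      obtain ⟨i, j, hij, -, hv'⟩ := hm
      rw [← stmt9_ind n i j hij] at hv'
      refine ⟨hv2, ?_⟩
      rintro x ⟨⟨hx, -⟩, -⟩ y ⟨⟨hy, -⟩, -⟩ ⟨a, b, ha, hb, hab, h⟩
      funext k
      refine stmt9_ext a b (x k) (y k) (v k) ha hb hab (hx k) (hy k) ?_ (congrFun h k)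
      rw [hv']
      dsimp only
      split_ifs <;> simp
end

section
/- Let σ be an admissible set for G_{n,2} whose admissible polytope P_σ has affine dimension n−1, and let I, J ⊆ {1,…,n} be subsets with I ∩ J ≠ ∅. If every point x ∈ P_σ satisfies ∑_{i∈I} x_i ≤ 1 and ∑_{j∈J} x_j ≤ 1, then every point x ∈ P_σ also satisfies ∑_{s∈I∪J} x_s ≤ 1. -/
lemma dim_aux {n : ℕ} (hn : 2 ≤ n) (S : Set (Fin n → ℝ)) (k : Fin n)
    (h0 : ∀ x ∈ S, x k = 0) (h2 : ∀ x ∈ S, ∑ i, x i = 2)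
    (hdim : Module.finrank ℝ (vectorSpan ℝ S) = n - 1) : False := by
  let f : (Fin n → ℝ) →ₗ[ℝ] ℝ × ℝ :=
    LinearMap.prod (∑ i, LinearMap.proj i) (LinearMap.proj k)
  have hf : ∀ x, f x = (∑ i, x i, x k) := by
    intro x; simp [f]
  have hsurj : Function.Surjective f := by
    rintro ⟨a, b⟩
    haveI : Nontrivial (Fin n) := Fin.nontrivial_iff_two_le.2 hn
    obtain ⟨l, hl⟩ := exists_ne k
    refine ⟨Pi.single k b + Pi.single l (a - b), ?_⟩
    rw [hf]
    simp [Finset.sum_add_distrib, hl.symm]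
  have hle : vectorSpan ℝ S ≤ LinearMap.ker f := by
    unfold vectorSpan
    rw [Submodule.span_le]
    rintro _ ⟨x, hx, y, hy, rfl⟩
    simp [hf, h0 x hx, h0 y hy, h2 x hx, h2 y hy]
  have h1 := Submodule.finrank_mono hle
  have h3 := LinearMap.finrank_range_add_finrank_ker f
  rw [LinearMap.range_eq_top.2 hsurj] at h3
  simp at h3
  omega

lemma plucker_trans {n : ℕ} (A : Matrix (Fin n) (Fin 2) ℂ) (i j k : Fin n)
    (hk : A k 0 ≠ 0 ∨ A k 1 ≠ 0) (hi : plucker A i k = 0) (hj : plucker A j k = 0) :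
    plucker A i j = 0 := by
  unfold plucker at *
  rcases hk with h | h <;> apply mul_left_cancel₀ h
  · linear_combination A j 0 * hi - A i 0 * hj
  · linear_combination A j 1 * hi - A i 1 * hj

lemma sum_vertexOf {n : ℕ} (I : Finset (Fin n)) (i j : Fin n) (hij : i ≠ j) :
    ∑ s ∈ I, vertexOf {i, j} s = (if i ∈ I then 1 else 0) + (if j ∈ I then 1 else 0) := by
  have : ∀ s, vertexOf {i, j} s = (if i = s then (1:ℝ) else 0) + (if j = s then 1 else 0) := by
    intro s
    unfold vertexOf
    by_cases h1 : s = i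
    · subst h1; simp [hij.symm]
    · by_cases h2 : s = j
      · subst h2; simp [hij]
      · simp [h1, h2, Ne.symm h1, Ne.symm h2]
  simp [this, Finset.sum_add_distrib]

/-- if P_σ is an admissible polytope of affine dimension n−1 on
which both ∑_{i∈I} x_i ≤ 1 and ∑_{j∈J} x_j ≤ 1 hold, with I ∩ J ≠ ∅, then
∑_{s∈I∪J} x_s ≤ 1 also holds on P_σ. -/
theorem stmt10 (n : ℕ) (σ : Set (Finset (Fin n))) (hσ : IsAdmissible σ)
    (hdim : Module.finrank ℝ (affineSpan ℝ (admPolytope σ)).direction = n - 1)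
    (I J : Finset (Fin n)) (hIJ : (I ∩ J).Nonempty)
    (hle : ∀ x ∈ admPolytope σ, (∑ i ∈ I, x i ≤ 1) ∧ (∑ j ∈ J, x j ≤ 1)) :
    ∀ x ∈ admPolytope σ, ∑ s ∈ I ∪ J, x s ≤ 1 := by
  obtain ⟨A, hA, rfl⟩ := hσ
  have hn : 2 ≤ n := by
    have := A.rank_le_height
    omega
  obtain ⟨k, hk⟩ := hIJ
  obtain ⟨hkI, hkJ⟩ := Finset.mem_inter.1 hk
  have hrow : A k 0 ≠ 0 ∨ A k 1 ≠ 0 := by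
    by_contra! hz
    unfold admPolytope at hdim
    rw [affineSpan_convexHull, direction_affineSpan] at hdim
    refine dim_aux hn _ k ?_ ?_ hdim
    · rintro _ ⟨_, ⟨i, j, hij, rfl, hp⟩, rfl⟩
      have h1 : k ≠ i := by rintro rfl; simp [plucker, hz] at hp
      have h2 : k ≠ j := by rintro rfl; simp [plucker, hz] at hp
      simp [vertexOf, h1, h2]
    · rintro _ ⟨_, ⟨i, j, hij, rfl, hp⟩, rfl⟩
      rw [sum_vertexOf _ _ _ hij]
      norm_num
  have key : ∀ i ∈ I ∪ J, plucker A i k = 0 := by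
    intro i hi
    by_contra hp
    have hik : i ≠ k := by rintro rfl; simp [plucker] at hp
    have := hle (vertexOf {i, k}) (subset_convexHull ℝ _ ⟨_, ⟨i, k, hik, rfl, hp⟩, rfl⟩)
    rw [sum_vertexOf _ _ _ hik, sum_vertexOf _ _ _ hik] at this
    rcases Finset.mem_union.1 hi with h | h <;> simp [h, hkI, hkJ] at this <;> norm_num at this
  have hconv : Convex ℝ {x : Fin n → ℝ | ∑ s ∈ I ∪ J, x s ≤ 1} := by
    have := convex_halfSpace_le (𝕜 := ℝ)
      (f := fun x : Fin n → ℝ => ∑ s ∈ I ∪ J, x s)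
      ⟨fun x y => by simp [Finset.sum_add_distrib], fun c x => by simp [Finset.mul_sum]⟩ 1
    exact this
  refine fun x hx => convexHull_min ?_ hconv hx
  rintro _ ⟨_, ⟨i, j, hij, rfl, hp⟩, rfl⟩
  rw [Set.mem_setOf_eq, sum_vertexOf _ _ _ hij]
  by_cases hi : i ∈ I ∪ J
  · by_cases hj : j ∈ I ∪ J
    · exact absurd (plucker_trans A i j k hrow (key i hi) (key j hj)) hp
    · simp only [hi, hj, if_true, if_false]; norm_num
  · simp only [hi, if_false]; split_ifs <;> norm_num
end

section
/- Let n ≥ 4 and let σ be an admissible set for G_{n,2} whose admissible polytope P_σ has affine dimension n−1 and P_σ ≠ Δ_{n,2}. Then there exists a nonempty finite family 𝒮 of pairwise disjoint subsets of {1,…,n}, each of cardinality between 2 and n−2, such that P_σ = Δ_{n,2} ∩ ⋂_{S∈𝒮} {x ∈ ℝ^n : ∑_{i∈S} x_i ≤ 1}. -/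
lemma sum_vertexOf_pair {n : ℕ} (S : Finset (Fin n)) (i j : Fin n) (hij : i ≠ j) :
    ∑ l ∈ S, vertexOf ({i, j} : Finset (Fin n)) l
      = (if i ∈ S then 1 else 0) + (if j ∈ S then (1 : ℝ) else 0) := by
  have h : ∀ l, vertexOf ({i, j} : Finset (Fin n)) l
      = (if i = l then 1 else 0) + (if j = l then (1 : ℝ) else 0) := by
    intro l
    unfold vertexOf
    simp only [Finset.mem_insert, Finset.mem_singleton]
    by_cases h1 : l = i
    · subst h1
      simp [hij.symm]
    · by_cases h2 : l = j
      · subst h2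
        simp [hij]
      · simp [h1, h2, Ne.symm h1, Ne.symm h2]
  simp only [h, Finset.sum_add_distrib, Finset.sum_ite_eq]

/-- A functional that is constant on the vertices contradicts full dimension. -/
lemma no_const {n : ℕ} (hn : 4 ≤ n) (A : Matrix (Fin n) (Fin 2) ℂ)
    (hdim : Module.finrank ℝ (affineSpan ℝ (admPolytope (pluckerSupport A))).direction = n - 1)
    (S : Finset (Fin n)) (a b : Fin n) (ha : a ∈ S) (hb : b ∉ S) (c : ℝ)
    (hc : ∀ p ∈ pluckerSupport A, ∑ l ∈ S, vertexOf p l = c) : False := by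
  classical
  let f : (Fin n → ℝ) →ₗ[ℝ] ℝ := ∑ l ∈ S, LinearMap.proj l
  let g : (Fin n → ℝ) →ₗ[ℝ] ℝ := ∑ l, LinearMap.proj l
  have hf : ∀ x, f x = ∑ l ∈ S, x l := by intro x; simp [f]
  have hg : ∀ x, g x = ∑ l, x l := by intro x; simp [g]
  have hle : (affineSpan ℝ (admPolytope (pluckerSupport A))).direction
      ≤ LinearMap.ker (f.prod g) := by
    unfold admPolytope
    rw [affineSpan_convexHull, direction_affineSpan, vectorSpan_def, Submodule.span_le]
    rintro _ ⟨_, ⟨p, hp, rfl⟩, _, ⟨q, hq, rfl⟩, rfl⟩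
    have key : ∀ p ∈ pluckerSupport A, g (vertexOf p) = 2 := by
      rintro p ⟨i, j, hij, rfl, -⟩
      rw [hg, sum_vertexOf_pair _ _ _ hij]
      norm_num
    have e1 : f (vertexOf p - vertexOf q) = 0 := by
      rw [map_sub, hf, hf, hc p hp, hc q hq, sub_self]
    have e2 : g (vertexOf p - vertexOf q) = 0 := by
      rw [map_sub, key p hp, key q hq, sub_self]
    exact Prod.ext e1 e2
  have hsurj : Function.Surjective (f.prod g) := by
    rintro ⟨u, v⟩
    refine ⟨Pi.single a u + Pi.single b (v - u), ?_⟩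
    have e1 : f (Pi.single a u + Pi.single b (v - u)) = u := by
      rw [map_add, hf, hf, Finset.sum_pi_single', Finset.sum_pi_single']
      simp [ha, hb]
    have e2 : g (Pi.single a u + Pi.single b (v - u)) = v := by
      rw [map_add, hg, hg, Finset.sum_pi_single', Finset.sum_pi_single']
      simp
    exact Prod.ext e1 e2
  have h1 := Submodule.finrank_mono hle
  have h2 := LinearMap.finrank_range_add_finrank_ker (f.prod g)
  rw [LinearMap.range_eq_top.2 hsurj, finrank_top] at h2
  simp at h2
  omega

/-- The polytope cut out by class inequalities. -/
def cutPoly {n : ℕ} (C : Fin n → Finset (Fin n)) : Set (Fin n → ℝ) :=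
  {x | ((∀ i, 0 ≤ x i ∧ x i ≤ 1) ∧ ∑ i, x i = 2) ∧ ∀ k, ∑ l ∈ C k, x l ≤ 1}

lemma cutPoly_convex {n : ℕ} (C : Fin n → Finset (Fin n)) : Convex ℝ (cutPoly C) := by
  rintro x ⟨⟨hx, hxs⟩, hxc⟩ y ⟨⟨hy, hys⟩, hyc⟩ a b ha hb hab
  have hsum : ∀ S : Finset (Fin n), ∑ l ∈ S, (a • x + b • y) l
      = a * ∑ l ∈ S, x l + b * ∑ l ∈ S, y l := by
    intro S
    simp [Finset.sum_add_distrib, Finset.mul_sum]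
  refine ⟨⟨fun i => ?_, ?_⟩, fun k => ?_⟩
  · have := hx i
    have := hy i
    simp only [Pi.add_apply, Pi.smul_apply, smul_eq_mul]
    constructor <;> nlinarith
  · rw [hsum, hxs, hys]; linarith
  · rw [hsum]
    have := hxc k
    have := hyc k
    nlinarith

lemma cutPoly_compact {n : ℕ} (C : Fin n → Finset (Fin n)) : IsCompact (cutPoly C) := by
  have h1 : IsCompact (Set.pi Set.univ (fun _ : Fin n => Set.Icc (0 : ℝ) 1)) :=
    isCompact_univ_pi fun _ => isCompact_Icc
  refine h1.of_isClosed_subset ?_ ?_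
  · have e : cutPoly C = (⋂ i, {x : Fin n → ℝ | 0 ≤ x i} ∩ {x | x i ≤ 1}) ∩
        {x | ∑ i, x i = 2} ∩ ⋂ k, {x | ∑ l ∈ C k, x l ≤ 1} := by
      ext x
      simp [cutPoly]
    rw [e]
    refine IsClosed.inter (IsClosed.inter (isClosed_iInter fun i => IsClosed.inter ?_ ?_) ?_)
      (isClosed_iInter fun k => ?_)
    · exact isClosed_le (by fun_prop) (by fun_prop)
    · exact isClosed_le (by fun_prop) (by fun_prop)
    · exact isClosed_eq (by fun_prop) (by fun_prop)
    · exact isClosed_le (by fun_prop) (by fun_prop)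
  · rintro x ⟨⟨hx, -⟩, -⟩ i -
    exact hx i

/-- Perturbation by `e_i - e_j`. -/
lemma perturb_mem {n : ℕ} (C : Fin n → Finset (Fin n)) (x : Fin n → ℝ) (hx : x ∈ cutPoly C)
    (i j : Fin n) (hij : i ≠ j) (ε : ℝ) (hε : 0 ≤ ε) (hi : x i + ε ≤ 1) (hj : ε ≤ x j)
    (hC : ∀ k, i ∈ C k → j ∉ C k → ∑ l ∈ C k, x l ≤ x i) :
    x + (Pi.single i ε - Pi.single j ε) ∈ cutPoly C := by
  obtain ⟨⟨h1, h2⟩, h3⟩ := hx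
  have hsum : ∀ S : Finset (Fin n), ∑ l ∈ S, (x + (Pi.single i ε - Pi.single j ε) : Fin n → ℝ) l
      = ∑ l ∈ S, x l + ((if i ∈ S then ε else 0) - (if j ∈ S then ε else 0)) := by
    intro S
    simp only [Pi.add_apply, Pi.sub_apply, Finset.sum_add_distrib, Finset.sum_sub_distrib,
      Finset.sum_pi_single']
  refine ⟨⟨fun l => ?_, ?_⟩, fun k => ?_⟩
  · have := h1 l
    simp only [Pi.add_apply, Pi.sub_apply]
    by_cases hli : l = i
    · subst hli
      simp [hij]
      constructor <;> linarith
    · by_cases hlj : l = j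
      · subst hlj
        simp [hli]
        constructor <;> linarith
      · simp [hli, hlj, this]
  · rw [hsum, h2]; simp
  · rw [hsum]
    have := h3 k
    by_cases hik : i ∈ C k <;> by_cases hjk : j ∈ C k <;> simp only [hik, hjk, if_true, if_false]
    · linarith
    · have := hC k hik hjk
      linarith
    · linarith
    · linarith

lemma not_extreme {n : ℕ} (C : Fin n → Finset (Fin n)) (x : Fin n → ℝ)
    (hx : x ∈ (cutPoly C).extremePoints ℝ)
    (i j : Fin n) (hij : i ≠ j) (hi : 0 < x i ∧ x i < 1) (hj : 0 < x j ∧ x j < 1)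
    (hC : ∀ k, i ∈ C k → j ∉ C k → ∑ l ∈ C k, x l ≤ x i)
    (hC' : ∀ k, j ∈ C k → i ∉ C k → ∑ l ∈ C k, x l ≤ x j) : False := by
  obtain ⟨ε, hε, h1, h2, h3, h4⟩ : ∃ ε : ℝ, 0 < ε ∧ ε ≤ x i ∧ ε ≤ 1 - x i ∧ ε ≤ x j ∧ ε ≤ 1 - x j := by
    refine ⟨min (min (x i) (1 - x i)) (min (x j) (1 - x j)), ?_, ?_, ?_, ?_, ?_⟩
    · simp only [lt_min_iff]
      refine ⟨⟨?_, ?_⟩, ?_, ?_⟩ <;> linarith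
    · exact (min_le_left _ _).trans (min_le_left _ _)
    · exact (min_le_left _ _).trans (min_le_right _ _)
    · exact (min_le_right _ _).trans (min_le_left _ _)
    · exact (min_le_right _ _).trans (min_le_right _ _)
  have m1 := perturb_mem C x hx.1 i j hij ε hε.le (by linarith) h3 hC
  have m2 := perturb_mem C x hx.1 j i hij.symm ε hε.le (by linarith) h1 hC'
  have := hx.2 m1 m2 ⟨1/2, 1/2, by norm_num, by norm_num, by norm_num, by
    ext l
    simp
    ring⟩
  have := congrFun this i
  simp [hij] at this
  linarith

lemma extreme_vertex {n : ℕ} (C : Fin n → Finset (Fin n)) (hself : ∀ k, k ∈ C k)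
    (hcl : ∀ k l m, l ∈ C k → m ∈ C k → ∀ k', l ∈ C k' → m ∈ C k')
    (x : Fin n → ℝ) (hx : x ∈ (cutPoly C).extremePoints ℝ) :
    ∃ i j, i ≠ j ∧ j ∉ C i ∧ x = vertexOf {i, j} := by
  classical
  have hxQ := hx.1
  obtain ⟨⟨h1, h2⟩, h3⟩ := hxQ
  have hzeroOne : ∀ i, x i = 0 ∨ x i = 1 := by
    by_contra! hcon
    obtain ⟨i, hi0, hi1⟩ := hcon
    have hi : 0 < x i ∧ x i < 1 :=
      ⟨lt_of_le_of_ne (h1 i).1 (Ne.symm hi0), lt_of_le_of_ne (h1 i).2 hi1⟩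
    by_cases hcase : ∃ k l m, l ∈ C k ∧ m ∈ C k ∧ l ≠ m ∧ (0 < x l ∧ x l < 1) ∧ (0 < x m ∧ x m < 1)
    · obtain ⟨k, l, m, hl, hm, hlm, hxl, hxm⟩ := hcase
      exact not_extreme C x hx l m hlm hxl hxm
        (fun k' a b => absurd (hcl k l m hl hm k' a) b)
        (fun k' a b => absurd (hcl k m l hm hl k' a) b)
    · have hone : ∀ a, (0 < x a ∧ x a < 1) → ∀ k, a ∈ C k → ∑ l ∈ C k, x l ≤ x a := by
        intro a ha k hak
        rw [← Finset.add_sum_erase _ _ hak]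
        have : ∑ l ∈ (C k).erase a, x l = 0 := by
          apply Finset.sum_eq_zero
          intro l hl
          obtain ⟨hla, hlk⟩ := Finset.mem_erase.1 hl
          by_contra hl0
          have hl0' : 0 < x l := lt_of_le_of_ne (h1 l).1 (Ne.symm hl0)
          by_cases hl1 : x l = 1
          · have h5 := h3 k
            rw [← Finset.add_sum_erase _ _ hak] at h5
            have h6 := Finset.single_le_sum (f := x) (fun m _ => (h1 m).1) hl
            linarith [ha.1]
          · exact hcase ⟨k, l, a, hlk, hak, hla, ⟨hl0', lt_of_le_of_ne (h1 l).2 hl1⟩, ha⟩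
        linarith
      have hex : ∃ j, j ≠ i ∧ (0 < x j ∧ x j < 1) := by
        by_contra! hno
        have hz : ∀ j ∈ Finset.univ.erase i, ∃ z : ℤ, x j = z := by
          intro j hj
          have hj' := hno j (Finset.ne_of_mem_erase hj)
          rcases (h1 j).1.eq_or_lt with h | h
          · exact ⟨0, by simp [← h]⟩
          · exact ⟨1, by have := hj' h; have := (h1 j).2; push_cast; linarith⟩
        choose! z hz using hz
        have hs := h2
        rw [← Finset.add_sum_erase _ _ (Finset.mem_univ i), Finset.sum_congr rfl hz,
          ← Int.cast_sum] at hs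
        obtain ⟨p, q⟩ := hi
        generalize ∑ j ∈ Finset.univ.erase i, z j = w at hs
        have e : x i = ((2 - w : ℤ) : ℝ) := by push_cast; linarith
        rw [e] at p q
        norm_cast at p q
        omega
      obtain ⟨j, hji, hj⟩ := hex
      exact not_extreme C x hx i j hji.symm hi hj (fun k a _ => hone i hi k a)
        (fun k a _ => hone j hj k a)
  have hxv : x = vertexOf (Finset.univ.filter fun i => x i = 1) := by
    ext i
    rcases hzeroOne i with h | h <;> simp [vertexOf, h]
  have hcard : (Finset.univ.filter fun i => x i = 1).card = 2 := by
    have : ∑ i, x i = ((Finset.univ.filter fun i => x i = 1).card : ℝ) := by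
      rw [Finset.card_filter]
      push_cast
      refine Finset.sum_congr rfl fun i _ => ?_
      rcases hzeroOne i with h | h <;> simp [h]
    rw [h2] at this
    exact_mod_cast this.symm
  obtain ⟨i, j, hij, he⟩ := Finset.card_eq_two.1 hcard
  refine ⟨i, j, hij, fun hj => ?_, by rw [← he]; exact hxv⟩
  have h5 := h3 i
  rw [hxv, he, sum_vertexOf_pair _ _ _ hij] at h5
  simp [hself, hj] at h5
  linarith

theorem stmt12 (n : ℕ) (hn : 4 ≤ n) (σ : Set (Finset (Fin n))) (hσ : IsAdmissible σ)
    (hdim : Module.finrank ℝ (affineSpan ℝ (admPolytope σ)).direction = n - 1)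
    (hne : admPolytope σ ≠ hypersimplex n 2) :
    ∃ 𝒮 : Finset (Finset (Fin n)), 𝒮.Nonempty ∧
      (∀ S ∈ 𝒮, ∀ S' ∈ 𝒮, S ≠ S' → Disjoint S S') ∧
      (∀ S ∈ 𝒮, 2 ≤ S.card ∧ S.card ≤ n - 2) ∧
      admPolytope σ = hypersimplex n 2 ∩ {x | ∀ S ∈ 𝒮, ∑ i ∈ S, x i ≤ 1} := by
  classical
  obtain ⟨A, -, rfl⟩ := hσ
  -- no loops
  have hloop : ∀ i, A i 0 ≠ 0 ∨ A i 1 ≠ 0 := by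
    intro i
    by_contra! hi
    obtain ⟨b, hb⟩ : ∃ b : Fin n, b ≠ i := by
      have : Nontrivial (Fin n) := Fin.nontrivial_iff_two_le.2 (by omega)
      exact exists_ne i
    refine no_const hn A hdim {i} i b (by simp) (by simpa using hb) 0 ?_
    rintro p ⟨k, l, hkl, rfl, hp⟩
    rw [sum_vertexOf_pair _ _ _ hkl]
    have hk : k ≠ i := by rintro rfl; simp [plucker, hi] at hp
    have hl : l ≠ i := by rintro rfl; simp [plucker, hi] at hp
    simp [hk, hl]
  have hsymm : ∀ i j, plucker A i j = 0 → plucker A j i = 0 := by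
    intro i j h
    unfold plucker at *
    linear_combination -h
  have htrans : ∀ i j k, plucker A i j = 0 → plucker A j k = 0 → plucker A i k = 0 := by
    intro i j k h1 h2
    unfold plucker at *
    rcases hloop j with h | h
    · apply mul_left_cancel₀ h
      linear_combination A k 0 * h1 + A i 0 * h2
    · apply mul_left_cancel₀ h
      linear_combination A k 1 * h1 + A i 1 * h2
  let C : Fin n → Finset (Fin n) := fun k => Finset.univ.filter fun l => plucker A k l = 0
  have hC : ∀ k l, l ∈ C k ↔ plucker A k l = 0 := by intro k l; simp [C]
  have hself : ∀ k, k ∈ C k := by intro k; rw [hC]; simp [plucker]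
  have hcl : ∀ k l m, l ∈ C k → m ∈ C k → ∀ k', l ∈ C k' → m ∈ C k' := by
    intro k l m h1 h2 k' h3
    rw [hC] at *
    exact htrans _ _ _ h3 (htrans _ _ _ (hsymm _ _ h1) h2)
  have hCeq : ∀ k k' l, l ∈ C k → l ∈ C k' → C k = C k' := by
    intro k k' l h1 h2
    ext m
    exact ⟨fun hm => hcl k l m h1 hm k' h2, fun hm => hcl k' l m h2 hm k h1⟩
  have hpair : ∀ k i j, plucker A i j ≠ 0 → i ∈ C k → j ∉ C k := by
    intro k i j h hi hj
    rw [hC] at hi hj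
    exact h (htrans _ _ _ (hsymm _ _ hi) hj)
  have hmain : admPolytope (pluckerSupport A) = cutPoly C := by
    apply Set.Subset.antisymm
    · apply convexHull_min _ (cutPoly_convex C)
      rintro _ ⟨p, ⟨i, j, hij, rfl, hp⟩, rfl⟩
      refine ⟨⟨fun l => ?_, ?_⟩, fun k => ?_⟩
      · unfold vertexOf
        split_ifs <;> norm_num
      · rw [sum_vertexOf_pair _ _ _ hij]
        norm_num
      · rw [sum_vertexOf_pair _ _ _ hij]
        by_cases hi : i ∈ C k
        · simp [hi, hpair k i j hp hi]
        · simp only [hi, if_false, zero_add]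
          split_ifs <;> norm_num
    · have hsub : (cutPoly C).extremePoints ℝ ⊆ vertexOf '' (pluckerSupport A) := by
        intro x hx
        obtain ⟨i, j, hij, hj, rfl⟩ := extreme_vertex C hself hcl x hx
        exact ⟨_, ⟨i, j, hij, rfl, fun h => hj ((hC i j).2 h)⟩, rfl⟩
      rw [← closure_convexHull_extremePoints (cutPoly_compact C) (cutPoly_convex C)]
      have hfin : (vertexOf '' (pluckerSupport A)).Finite := (Set.toFinite _).image _
      exact closure_minimal (convexHull_mono hsub) (hfin.isClosed_convexHull ℝ)
  have hcard : ∀ k, (C k).card ≤ n - 2 := by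
    intro k
    by_contra! hk
    have hcc : (C k)ᶜ.card ≤ 1 := by
      rw [Finset.card_compl, Fintype.card_fin]; omega
    have hcc' := Finset.card_le_one.1 hcc
    by_cases hb : ∃ b, b ∉ C k
    · obtain ⟨b, hb⟩ := hb
      refine no_const hn A hdim (C k) k b (hself k) hb 1 ?_
      rintro p ⟨i, j, hij, rfl, hp⟩
      rw [sum_vertexOf_pair _ _ _ hij]
      by_cases hi : i ∈ C k
      · simp [hi, hpair k i j hp hi]
      · have hj : j ∈ C k := by
          by_contra hj
          exact hij (hcc' i (by simpa using hi) j (by simpa using hj))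
        simp [hi, hj]
    · push Not at hb
      obtain ⟨b, hbk⟩ : ∃ b : Fin n, b ≠ k := by
        have : Nontrivial (Fin n) := Fin.nontrivial_iff_two_le.2 (by omega)
        exact exists_ne k
      refine no_const hn A hdim {k} k b (by simp) (by simpa using hbk) 0 ?_
      rintro p ⟨i, j, hij, rfl, hp⟩
      exact absurd (hb j) (hpair k i j hp (hb i))
  have heq : admPolytope (pluckerSupport A) = hypersimplex n 2 ∩
      {x | ∀ S ∈ (Finset.univ.image C).filter (fun S => 2 ≤ S.card), ∑ i ∈ S, x i ≤ 1} := by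
    rw [hmain]
    ext x
    simp only [cutPoly, hypersimplex, Set.mem_inter_iff, Set.mem_ofPred_eq, Finset.mem_filter,
      Finset.mem_image, Finset.mem_univ, true_and, Nat.cast_ofNat]
    refine and_congr_right fun hx => ⟨?_, fun h k => ?_⟩
    · rintro h S ⟨⟨k, rfl⟩, -⟩
      exact h k
    · by_cases h2 : 2 ≤ (C k).card
      · exact h _ ⟨⟨k, rfl⟩, h2⟩
      · have h1 : (C k) = {k} := by
          refine Finset.eq_singleton_iff_unique_mem.2 ⟨hself k, fun l hl => ?_⟩
          exact Finset.card_le_one.1 (by omega) l hl k (hself k)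
        rw [h1, Finset.sum_singleton]
        exact (hx.1 k).2
  refine ⟨_, ?_, ?_, ?_, heq⟩
  · rw [Finset.nonempty_iff_ne_empty]
    intro h
    rw [h] at heq
    apply hne
    rw [heq]
    simp
  · intro S hS S' hS' hSS
    simp only [Finset.mem_filter, Finset.mem_image, Finset.mem_univ, true_and] at hS hS'
    obtain ⟨⟨k, rfl⟩, -⟩ := hS
    obtain ⟨⟨k', rfl⟩, -⟩ := hS'
    rw [Finset.disjoint_left]
    intro l hl hl'
    exact hSS (hCeq k k' l hl hl')
  · intro S hS
    simp only [Finset.mem_filter, Finset.mem_image, Finset.mem_univ, true_and] at hS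
    obtain ⟨⟨k, rfl⟩, h2⟩ := hS
    exact ⟨h2, hcard k⟩
end

section
/- Let n ≥ 4 and let A and B be complex n×2 matrices of rank 2 with the same Plücker support σ(A) = σ(B) = σ. Suppose the admissible polytope P_σ has affine dimension n−2 and has nonempty intersection with the interior of Δ_{n,2}. Then there exist t ∈ (ℂ^×)^n and g ∈ GL_2(ℂ) such that B = D(t)·A·g, where D(t) is the n×n diagonal matrix with diagonal entries t_1,…,t_n. In other words, the stratum W_σ of G_{n,2} consists of a single orbit of the algebraic torus (ℂ^×)^n, i.e., its space of parameters F_σ = W_σ/(ℂ^×)^n is a point. -/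
theorem aux_mem {n : ℕ} (A : Matrix (Fin n) (Fin 2) ℂ) (i j : Fin n) :
    ({i, j} : Finset (Fin n)) ∈ pluckerSupport A ↔ plucker A i j ≠ 0 := by
  constructor
  · rintro ⟨a, b, hab, h, hp⟩
    have h1 : i = a ∨ i = b := by
      have : i ∈ ({a, b} : Finset (Fin n)) := by rw [← h]; simp
      simpa using this
    have h2 : j = a ∨ j = b := by
      have : j ∈ ({a, b} : Finset (Fin n)) := by rw [← h]; simp
      simpa using this
    have h3 : a = i ∨ a = j := by
      have : a ∈ ({i, j} : Finset (Fin n)) := by rw [h]; simp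
      simpa using this
    have h4 : b = i ∨ b = j := by
      have : b ∈ ({i, j} : Finset (Fin n)) := by rw [h]; simp
      simpa using this
    have h5 : (i = a ∧ j = b) ∨ (i = b ∧ j = a) := by grind
    rcases h5 with ⟨rfl, rfl⟩ | ⟨rfl, rfl⟩
    · exact hp
    · intro h0
      apply hp
      unfold plucker at *
      linear_combination -h0
  · intro h
    refine ⟨i, j, ?_, rfl, h⟩
    rintro rfl
    apply h
    unfold plucker
    ring

theorem aux_vertex {n : ℕ} (i j : Fin n) (h : i ≠ j) :
    vertexOf ({i, j} : Finset (Fin n)) = Pi.single i 1 + Pi.single j 1 := by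
  funext k
  simp only [vertexOf, Pi.add_apply, Pi.single_apply, Finset.mem_insert, Finset.mem_singleton]
  by_cases h1 : k = i <;> by_cases h2 : k = j <;> simp_all

theorem aux_interior {n : ℕ} (hn : 4 ≤ n) (x : Fin n → ℝ)
    (hx : x ∈ intrinsicInterior ℝ (hypersimplex n 2)) (m : Fin n) : x m ≠ 0 := by
  intro h0
  obtain ⟨z, hz, rfl⟩ := mem_intrinsicInterior.1 hx
  have hn' : (4 : ℝ) ≤ n := by exact_mod_cast hn
  have hy : (fun _ => 2 / (n : ℝ)) ∈ hypersimplex n 2 := by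
    refine ⟨fun i => ⟨by positivity, ?_⟩, ?_⟩
    · rw [div_le_one (by linarith)]; linarith
    · simp; field_simp
  have hy' := subset_affineSpan ℝ _ hy
  let f : ℝ → affineSpan ℝ (hypersimplex n 2) := fun t =>
    ⟨AffineMap.lineMap (z : Fin n → ℝ) (fun _ => 2 / (n : ℝ)) t,
      AffineMap.lineMap_mem t z.2 hy'⟩
  have hf : Continuous f := by
    apply Continuous.subtype_mk
    exact AffineMap.lineMap_continuous
  have hf0 : f 0 = z := by
    apply Subtype.ext
    simp [f]
  have hopen : IsOpen (f ⁻¹' interior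
      ((↑) ⁻¹' hypersimplex n 2 : Set (affineSpan ℝ (hypersimplex n 2)))) :=
    isOpen_interior.preimage hf
  obtain ⟨ε, hε, hb⟩ := Metric.isOpen_iff.1 hopen 0 (by simpa [hf0] using hz)
  have hmem : (-(ε / 2)) ∈ Metric.ball (0 : ℝ) ε := by
    rw [Metric.mem_ball, Real.dist_eq, sub_zero, abs_neg, abs_of_pos (by linarith)]
    linarith
  have h1 := interior_subset (hb hmem)
  have h2 := (h1.1 m).1
  have h3 : (f (-(ε / 2)) : Fin n → ℝ) m = -(ε / 2) * (2 / n) := by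
    simp [f, AffineMap.lineMap_apply, h0]
  rw [h3] at h2
  have : 0 < ε / 2 * (2 / (n : ℝ)) := by positivity
  linarith

theorem aux_dim {n : ℕ} (hn : 4 ≤ n) (A : Matrix (Fin n) (Fin 2) ℂ)
    (hrow : ∀ m, A m 0 ≠ 0 ∨ A m 1 ≠ 0)
    (hdim : Module.finrank ℝ (affineSpan ℝ (admPolytope (pluckerSupport A))).direction = n - 2)
    (i j l : Fin n) (hij : plucker A i j ≠ 0) (hil : plucker A i l ≠ 0)
    (hjl : plucker A j l ≠ 0) : False := by
  set D := (affineSpan ℝ (admPolytope (pluckerSupport A))).direction with hD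
  have ne : ∀ a b, plucker A a b ≠ 0 → a ≠ b := by
    rintro a b h rfl
    apply h; unfold plucker; ring
  have sw : ∀ a b, plucker A a b ≠ 0 → plucker A b a ≠ 0 := by
    intro a b h h'
    apply h; unfold plucker at *; linear_combination -h'
  have key : ∀ a b c, plucker A a b ≠ 0 → plucker A c b ≠ 0 →
      (Pi.single a 1 - Pi.single c 1 : Fin n → ℝ) ∈ D := by
    intro a b c h1 h2
    have m1 : ∀ a b, plucker A a b ≠ 0 → (Pi.single a 1 + Pi.single b 1 : Fin n → ℝ) ∈
        affineSpan ℝ (admPolytope (pluckerSupport A)) := by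
      intro a b h
      rw [← aux_vertex a b (ne a b h)]
      apply subset_affineSpan
      apply subset_convexHull
      exact ⟨_, (aux_mem A a b).2 h, rfl⟩
    have := AffineSubspace.vsub_mem_direction (m1 a b h1) (m1 c b h2)
    simpa using this
  have hji := key j l i hjl hil
  have hli := key l j i (sw _ _ hjl) hij
  have all : ∀ m, (Pi.single m 1 - Pi.single i 1 : Fin n → ℝ) ∈ D := by
    intro m
    by_cases h1 : plucker A m j = 0
    · have h2 : plucker A m l ≠ 0 := by
        intro h2
        unfold plucker at h1 h2 hjl
        have e0 : A m 0 * (A j 0 * A l 1 - A l 0 * A j 1) = 0 := by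
          linear_combination A j 0 * h2 - A l 0 * h1
        have e1 : A m 1 * (A j 0 * A l 1 - A l 0 * A j 1) = 0 := by
          linear_combination A j 1 * h2 - A l 1 * h1
        rcases hrow m with h | h
        · exact (mul_ne_zero h hjl) e0
        · exact (mul_ne_zero h hjl) e1
      exact key m l i h2 hil
    · exact key m j i h1 hij
  have top : D ⊔ Submodule.span ℝ {(Pi.single i 1 : Fin n → ℝ)} = ⊤ := by
    rw [eq_top_iff, ← (Pi.basisFun ℝ (Fin n)).span_eq, Submodule.span_le]
    rintro _ ⟨m, rfl⟩
    rw [Pi.basisFun_apply]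
    have := Submodule.add_mem_sup (all m)
      (Submodule.mem_span_singleton_self (R := ℝ) (Pi.single i 1 : Fin n → ℝ))
    simpa using this
  have h1 := Submodule.finrank_add_le_finrank_add_finrank D
    (Submodule.span ℝ {(Pi.single i 1 : Fin n → ℝ)})
  have h2 := finrank_span_le_card (R := ℝ) ({(Pi.single i 1 : Fin n → ℝ)} : Set (Fin n → ℝ))
  rw [top, finrank_top, hdim] at h1
  simp at h1 h2
  omega

/-- if two rank-2 matrices A, B have the same Plücker support σ
and the admissible polytope P_σ has affine dimension n−2 and meets the
intrinsic interior of Δ_{n,2}, then B = D(t)·A·g for some t ∈ (ℂ^×)^n and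
g ∈ GL_2(ℂ): the stratum W_σ is a single (ℂ^×)^n-orbit. -/
theorem stmt13 (n : ℕ) (hn : 4 ≤ n) (A B : Matrix (Fin n) (Fin 2) ℂ)
    (hA : A.rank = 2) (hB : B.rank = 2) (σ : Set (Finset (Fin n)))
    (hσA : pluckerSupport A = σ) (hσB : pluckerSupport B = σ)
    (hdim : Module.finrank ℝ (affineSpan ℝ (admPolytope σ)).direction = n - 2)
    (hint : (admPolytope σ ∩ intrinsicInterior ℝ (hypersimplex n 2)).Nonempty) :
    ∃ t : Fin n → ℂ, (∀ i, t i ≠ 0) ∧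
      ∃ g : Matrix (Fin 2) (Fin 2) ℂ, IsUnit g ∧
        B = Matrix.diagonal t * A * g := by
  subst hσA
  obtain ⟨x, hxP, hxI⟩ := hint
  have hiff : ∀ a b, plucker B a b = 0 ↔ plucker A a b = 0 := by
    intro a b
    rw [← not_iff_not]
    have h1 := aux_mem B a b
    rw [hσB] at h1
    exact h1.symm.trans (aux_mem A a b)
  have hrowG : ∀ C : Matrix (Fin n) (Fin 2) ℂ, pluckerSupport C = pluckerSupport A →
      ∀ m, C m 0 ≠ 0 ∨ C m 1 ≠ 0 := by
    intro C hC m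
    by_contra! hcon
    apply aux_interior hn x hxI m
    have hsub : admPolytope (pluckerSupport A) ⊆ {y : Fin n → ℝ | y m = 0} := by
      apply convexHull_min
      · rintro _ ⟨p, hp, rfl⟩
        rw [← hC] at hp
        obtain ⟨a, b, hab, rfl, h⟩ := hp
        have h1 : m ≠ a := by
          rintro rfl; apply h; simp [plucker, hcon.1, hcon.2]
        have h2 : m ≠ b := by
          rintro rfl; apply h; simp [plucker, hcon.1, hcon.2]
        simp [vertexOf, h1, h2]
      · exact (convex_singleton (0 : ℝ)).linear_preimage (LinearMap.proj m : (Fin n → ℝ) →ₗ[ℝ] ℝ)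
    exact hsub hxP
  have hrA := hrowG A rfl
  have hne : (vertexOf '' pluckerSupport A).Nonempty := convexHull_nonempty_iff.1 ⟨x, hxP⟩
  obtain ⟨_, p, ⟨i, j, hij, rfl, hA0⟩, rfl⟩ := hne
  have hB0 : plucker B i j ≠ 0 := fun h => hA0 ((hiff i j).1 h)
  have htwo : ∀ l, plucker A i l = 0 ∨ plucker A j l = 0 := by
    intro l
    by_contra! h
    exact aux_dim hn A hrA hdim i j l hA0 h.1 h.2
  have hone : ∀ l, plucker A i l = 0 → plucker A j l ≠ 0 := by
    intro l h1 h2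
    unfold plucker at h1 h2 hA0
    have e0 : A l 0 * (A i 0 * A j 1 - A j 0 * A i 1) = 0 := by
      linear_combination A j 0 * h1 - A i 0 * h2
    have e1 : A l 1 * (A i 0 * A j 1 - A j 0 * A i 1) = 0 := by
      linear_combination A j 1 * h1 - A i 1 * h2
    rcases hrA l with h | h
    · exact (mul_ne_zero h hA0) e0
    · exact (mul_ne_zero h hA0) e1
  -- Cramer
  have cram : ∀ (C : Matrix (Fin n) (Fin 2) ℂ) l k,
      C l k * plucker C i j = - plucker C j l * C i k + plucker C i l * C j k := by
    intro C l k
    unfold plucker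
    fin_cases k <;> simp <;> ring
  have hg : ∃ g : Matrix (Fin 2) (Fin 2) ℂ, IsUnit g ∧
      (∀ k, A i 0 * g 0 k + A i 1 * g 1 k = B i k) ∧
      (∀ k, A j 0 * g 0 k + A j 1 * g 1 k = B j k) := by
    refine ⟨Matrix.of fun r k => if r = 0 then (A j 1 * B i k - A i 1 * B j k) / plucker A i j
      else (A i 0 * B j k - A j 0 * B i k) / plucker A i j, ?_, ?_, ?_⟩
    · rw [Matrix.isUnit_iff_isUnit_det, isUnit_iff_ne_zero, Matrix.det_fin_two]
      have : plucker B i j / plucker A i j ≠ 0 := div_ne_zero hB0 hA0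
      convert this using 1
      simp only [Matrix.of_apply, if_true, one_ne_zero, if_false]
      field_simp
      unfold plucker
      ring
    · intro k
      simp only [Matrix.of_apply, if_true, one_ne_zero, if_false]
      field_simp
      unfold plucker
      ring
    · intro k
      simp only [Matrix.of_apply, if_true, one_ne_zero, if_false]
      field_simp
      unfold plucker
      ring
  obtain ⟨g, hgu, hgi, hgj⟩ := hg
  have ht : ∀ l, ∃ t : ℂ, t ≠ 0 ∧ ∀ k, B l k = t * (A l 0 * g 0 k + A l 1 * g 1 k) := by
    intro l
    have hAl : ∀ k, (A l 0 * g 0 k + A l 1 * g 1 k) * plucker A i j =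
        - plucker A j l * B i k + plucker A i l * B j k := by
      intro k
      rw [← hgi, ← hgj]
      linear_combination g 0 k * cram A l 0 + g 1 k * cram A l 1
    by_cases h : plucker A i l = 0
    · have hA1 := hone l h
      have hB1 : plucker B j l ≠ 0 := fun h => hA1 ((hiff _ _).1 h)
      have h' := (hiff _ _).2 h
      refine ⟨plucker B j l * plucker A i j / (plucker B i j * plucker A j l), by positivity, ?_⟩
      intro k
      have c1 := hAl k
      have c2 := cram B l k
      rw [h] at c1
      rw [h'] at c2
      rw [div_mul_eq_mul_div, eq_div_iff (mul_ne_zero hB0 hA1)]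
      linear_combination plucker A j l * c2 - plucker B j l * c1
    · have h0 : plucker A j l = 0 := (htwo l).resolve_left h
      have hB1 : plucker B i l ≠ 0 := fun h' => h ((hiff _ _).1 h')
      have h' := (hiff _ _).2 h0
      refine ⟨plucker B i l * plucker A i j / (plucker B i j * plucker A i l), by positivity, ?_⟩
      intro k
      have c1 := hAl k
      have c2 := cram B l k
      rw [h0] at c1
      rw [h'] at c2
      rw [div_mul_eq_mul_div, eq_div_iff (mul_ne_zero hB0 h)]
      linear_combination plucker A i l * c2 - plucker B i l * c1
  choose t ht0 ht1 using ht
  refine ⟨t, ht0, g, hgu, ?_⟩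
  ext l k
  rw [ht1, Matrix.mul_assoc, Matrix.diagonal_mul, Matrix.mul_apply, Fin.sum_univ_two]
end

section
/- Let n ≥ 4 and let S, S' ⊆ {1,…,n} with 2 ≤ |S| ≤ n−2 and 2 ≤ |S'| ≤ n−2. Then Δ_{n,2} ∩ {x : ∑_{i∈S} x_i = 1} = Δ_{n,2} ∩ {x : ∑_{i∈S'} x_i = 1} if and only if S' = S or S' = {1,…,n}∖S. Consequently, for each p with 2 ≤ p < n/2 the number of distinct admissible polytopes of the form Δ_{n,2} ∩ {∑_{i∈S} x_i = 1} with |S| = p equals the binomial coefficient C(n,p), and for n even the number of such distinct polytopes with |S| = n/2 equals C(n, n/2)/2. -/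
/-- The section of the hypersimplex cut out by `S`. -/
def hsec (n : ℕ) (S : Finset (Fin n)) : Set (Fin n → ℝ) :=
  hypersimplex n 2 ∩ {x | ∑ i ∈ S, x i = 1}

lemma pair_mem_hsec {n : ℕ} (S : Finset (Fin n)) (i j : Fin n) (hij : i ≠ j) :
    (fun k => (if k = i then (1 : ℝ) else 0) + (if k = j then (1 : ℝ) else 0)) ∈ hsec n S
      ↔ ¬ (i ∈ S ↔ j ∈ S) := by
  have h1 : (fun k => (if k = i then (1 : ℝ) else 0) + (if k = j then (1 : ℝ) else 0))
      ∈ hypersimplex n 2 := by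
    refine ⟨fun k => ?_, ?_⟩
    · by_cases h : k = i
      · have : k ≠ j := fun h' => hij (h.symm.trans h')
        simp [h, hij]
      · by_cases h' : k = j <;> simp [h, h', hij.symm]
    · simp [Finset.sum_add_distrib]
      norm_num
  have h2 : (fun k => (if k = i then (1 : ℝ) else 0) + (if k = j then (1 : ℝ) else 0)) ∈ hsec n S
      ↔ (if i ∈ S then (1 : ℝ) else 0) + (if j ∈ S then (1 : ℝ) else 0) = 1 := by
    simp [hsec, h1, Finset.sum_add_distrib]
  rw [h2]
  by_cases hi : i ∈ S <;> by_cases hj : j ∈ S <;> simp [hi, hj]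

lemma hsec_compl {n : ℕ} (S : Finset (Fin n)) : hsec n Sᶜ = hsec n S := by
  ext x
  simp only [hsec, Set.mem_inter_iff, Set.mem_setOf_eq]
  refine and_congr_right fun hx => ?_
  have h := Finset.sum_add_sum_compl S x
  have h2 := hx.2
  push_cast at h2
  constructor <;> intro h3 <;> linarith

lemma hsec_eq_iff {n : ℕ} (hn : 4 ≤ n) (S S' : Finset (Fin n)) :
    hsec n S = hsec n S' ↔ (S' = S ∨ S' = Sᶜ) := by
  constructor
  · intro h
    have key : ∀ i j : Fin n, i ≠ j → ((i ∈ S ↔ j ∈ S) ↔ (i ∈ S' ↔ j ∈ S')) := by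
      intro i j hij
      have := pair_mem_hsec S i j hij
      rw [h, pair_mem_hsec S' i j hij] at this
      tauto
    have z : Fin n := ⟨0, by omega⟩
    by_cases hz : z ∈ S ↔ z ∈ S'
    · left
      ext j
      by_cases hj : z = j
      · subst hj; tauto
      · have := key z j hj
        tauto
    · right
      ext j
      rw [Finset.mem_compl]
      by_cases hj : z = j
      · subst hj; tauto
      · have := key z j hj
        tauto
  · rintro (rfl | rfl)
    · rfl
    · exact (hsec_compl S).symm

lemma half_card {n : ℕ} (z : Fin n) (hn2 : n % 2 = 0) :
    ((Finset.powersetCard (n / 2) (Finset.univ : Finset (Fin n))).filter (fun S => z ∈ S)).card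
      = n.choose (n / 2) / 2 := by
  have h := Finset.card_filter_add_card_filter_not
    (s := Finset.powersetCard (n / 2) (Finset.univ : Finset (Fin n))) (fun S => z ∈ S)
  have h2 : ((Finset.powersetCard (n / 2) (Finset.univ : Finset (Fin n))).filter
      (fun S => z ∈ S)).card = ((Finset.powersetCard (n / 2)
      (Finset.univ : Finset (Fin n))).filter (fun S => ¬ z ∈ S)).card := by
    refine Finset.card_nbij' (fun S => Sᶜ) (fun S => Sᶜ) ?_ ?_ ?_ ?_
    · intro S hS
      simp [Finset.card_compl] at hS ⊢
      exact ⟨by omega, hS.2⟩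
    · intro S hS
      simp [Finset.card_compl] at hS ⊢
      exact ⟨by omega, hS.2⟩
    · intro S _; simp
    · intro S _; simp
  rw [Finset.card_powersetCard, Finset.card_univ, Fintype.card_fin] at h
  omega

/-- for 2 ≤ |S|, |S'| ≤ n−2, the polytopes
Δ_{n,2} ∩ {∑_{i∈S} x_i = 1} and Δ_{n,2} ∩ {∑_{i∈S'} x_i = 1} coincide iff
S' = S or S' = Sᶜ. Consequently there are C(n,p) such distinct polytopes with
|S| = p for 2 ≤ p < n/2, and C(n, n/2)/2 of them with |S| = n/2 for n even. -/
theorem stmt16 (n : ℕ) (hn : 4 ≤ n) :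
    (∀ S S' : Finset (Fin n), 2 ≤ S.card → S.card ≤ n - 2 →
      2 ≤ S'.card → S'.card ≤ n - 2 →
      ((hypersimplex n 2 ∩ {x | ∑ i ∈ S, x i = 1} =
        hypersimplex n 2 ∩ {x | ∑ i ∈ S', x i = 1}) ↔ (S' = S ∨ S' = Sᶜ))) ∧
    (∀ p : ℕ, 2 ≤ p → 2 * p < n →
      {P : Set (Fin n → ℝ) | ∃ S : Finset (Fin n), S.card = p ∧
        P = hypersimplex n 2 ∩ {x | ∑ i ∈ S, x i = 1}}.ncard = n.choose p) ∧
    (n % 2 = 0 →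
      {P : Set (Fin n → ℝ) | ∃ S : Finset (Fin n), S.card = n / 2 ∧
        P = hypersimplex n 2 ∩ {x | ∑ i ∈ S, x i = 1}}.ncard = n.choose (n / 2) / 2) := by
  refine ⟨fun S S' _ _ _ _ => hsec_eq_iff hn S S', ?_, ?_⟩
  · intro p hp hpn
    have hset : {P : Set (Fin n → ℝ) | ∃ S : Finset (Fin n), S.card = p ∧
        P = hypersimplex n 2 ∩ {x | ∑ i ∈ S, x i = 1}} =
        hsec n '' (Finset.powersetCard p (Finset.univ : Finset (Fin n)) : Set _) := by
      ext P
      simp [hsec, eq_comm]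
    rw [hset, Set.ncard_image_of_injOn, Set.ncard_coe_finset, Finset.card_powersetCard,
      Finset.card_univ, Fintype.card_fin]
    intro S hS S' hS' h
    simp at hS hS'
    rcases (hsec_eq_iff hn S S').1 h with h | h
    · exact h.symm
    · rw [h, Finset.card_compl, Fintype.card_fin] at hS'
      omega
  · intro hn2
    let z : Fin n := ⟨0, by omega⟩
    have hset : {P : Set (Fin n → ℝ) | ∃ S : Finset (Fin n), S.card = n / 2 ∧
        P = hypersimplex n 2 ∩ {x | ∑ i ∈ S, x i = 1}} =
        hsec n '' ((Finset.powersetCard (n / 2) (Finset.univ : Finset (Fin n))).filter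
          (fun S => z ∈ S) : Finset (Finset (Fin n))) := by
      ext P
      constructor
      · rintro ⟨S, hS, rfl⟩
        by_cases hz : z ∈ S
        · exact ⟨S, by simp [hS, hz], rfl⟩
        · refine ⟨Sᶜ, ?_, hsec_compl S⟩
          simp [hz, Finset.card_compl]
          omega
      · rintro ⟨S, hS, rfl⟩
        simp at hS
        exact ⟨S, hS.1, rfl⟩
    rw [hset, Set.ncard_image_of_injOn, Set.ncard_coe_finset, half_card z hn2]
    intro S hS S' hS' h
    simp at hS hS'
    rcases (hsec_eq_iff hn S S').1 h with h | h
    · exact h.symm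
    · have := hS'.2
      rw [h, Finset.mem_compl] at this
      exact absurd hS.2 this
end
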